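/- arXiv:2108.03646 — 2 statements merged into one kernel-verified Lean document; each statement's English description precedes it below -/
import Mathlib

section
/- Let ϵ > 0 and let h : ℝ → ℂ be continuously differentiable and 2π-periodic. Define v on the open ball B_ϵ by v(r cos φ, r sin φ) := (r/ϵ) h(φ) for 0 ≤ r < ϵ and 0 ≤ φ < 2π; v is differentiable on B_ϵ ∖ {0}. Then ∫_{B_ϵ} |∇v|² dx dy ≤ 4 ∫₀^{2π} ( |h(φ)|² + |h′(φ)|² ) dφ. -/
open MeasureTheory Real Set

noncomputable section

abbrev E2 : Type := EuclideanSpace ℝ (Fin 2)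

/-- The point `(x, y)` in the Euclidean plane. -/
def pt (x y : ℝ) : E2 := !₂[x, y]

/-- The `i`-th partial derivative of `f : ℝ² → ℂ`. -/
def pd (i : Fin 2) (f : E2 → ℂ) (p : E2) : ℂ :=
  fderiv ℝ f p (EuclideanSpace.single i 1)

/-- `|∇f|²` at `p`, i.e. `|∂f/∂x|² + |∂f/∂y|²`. -/
def gradSq (f : E2 → ℂ) (p : E2) : ℝ :=
  ‖pd 0 f p‖ ^ 2 + ‖pd 1 f p‖ ^ 2

/-- The Laplacian `Δf` at `p`. -/
def lap (f : E2 → ℂ) (p : E2) : ℂ :=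
  pd 0 (pd 0 f) p + pd 1 (pd 1 f) p

/-- The point `(τ cos φ, τ sin φ)` on the circle of radius `τ`. -/
def circ (τ φ : ℝ) : E2 := pt (τ * Real.cos φ) (τ * Real.sin φ)

lemma circ_eq (r φ : ℝ) : circ r φ = (r * Real.cos φ) • (EuclideanSpace.single 0 1 : E2)
    + (r * Real.sin φ) • (EuclideanSpace.single 1 1 : E2) := by
  ext i
  fin_cases i <;> simp [circ, pt]

lemma v_all (ϵ : ℝ) (h : ℝ → ℂ) (hper : Function.Periodic h (2 * π)) (v : E2 → ℂ)
    (hv : ∀ r φ : ℝ, 0 ≤ r → r < ϵ → 0 ≤ φ → φ < 2 * π →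
      v (pt (r * Real.cos φ) (r * Real.sin φ)) = (r / ϵ : ℝ) * h φ)
    (r φ : ℝ) (hr : 0 ≤ r) (hr' : r < ϵ) : v (circ r φ) = (r / ϵ : ℝ) * h φ := by
  have h2 : 0 < 2 * π := by positivity
  obtain ⟨y, hy, hyh⟩ := Function.Periodic.exists_mem_Ico₀
    (f := fun φ => (h φ, Real.cos φ, Real.sin φ)) (c := 2 * π)
    (fun x => by simp [hper x]) h2 φ
  simp only [Prod.mk.injEq] at hyh
  obtain ⟨h1, h2, h3⟩ := hyh
  rw [circ, h1, h2, h3]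
  exact hv r y hr hr' hy.1 hy.2

lemma gradSq_le (ϵ : ℝ) (hϵ : 0 < ϵ) (h : ℝ → ℂ)
    (hsmooth : ContDiff ℝ 1 h) (v : E2 → ℂ)
    (hv : ∀ r φ : ℝ, 0 ≤ r → r < ϵ → v (circ r φ) = (r / ϵ : ℝ) * h φ)
    (r φ : ℝ) (hr : 0 < r) (hr' : r < ϵ) :
    gradSq v (circ r φ) ≤ (‖h φ‖ ^ 2 + ‖deriv h φ‖ ^ 2) / ϵ ^ 2 := by
  by_cases hd : DifferentiableAt ℝ v (circ r φ)
  swap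
  · simp only [gradSq, pd, fderiv_zero_of_not_differentiableAt hd]
    simp
    positivity
  have hL := hd.hasFDerivAt
  rw [gradSq, pd, pd]
  set L := fderiv ℝ v (circ r φ)
  set a := L (EuclideanSpace.single 0 1) with ha
  set b := L (EuclideanSpace.single 1 1) with hb
  have e1 : (Real.cos φ : ℝ) • a + (Real.sin φ) • b = ((1 / ϵ : ℝ) : ℂ) * h φ := by
    have d1 : HasDerivAt (fun s => circ s φ) ((Real.cos φ) • (EuclideanSpace.single 0 1 : E2)
        + (Real.sin φ) • (EuclideanSpace.single 1 1 : E2)) r := by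
      simp only [circ_eq]
      have := (((hasDerivAt_id r).mul_const (Real.cos φ)).smul_const
        (EuclideanSpace.single 0 1 : E2)).add
        (((hasDerivAt_id r).mul_const (Real.sin φ)).smul_const (EuclideanSpace.single 1 1 : E2))
      simp only [id, one_mul] at this
      exact this
    have d2 := hL.comp_hasDerivAt r d1
    have d3 : HasDerivAt (fun s : ℝ => ((s / ϵ : ℝ) : ℂ) * h φ) (((1 / ϵ : ℝ) : ℂ) * h φ) r :=
      (((hasDerivAt_id r).div_const ϵ).ofReal_comp).mul_const _
    have d4 : (v ∘ fun s => circ s φ) =ᶠ[nhds r] (fun s : ℝ => ((s / ϵ : ℝ) : ℂ) * h φ) := by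
      filter_upwards [Ioo_mem_nhds hr hr'] with s hs
      exact hv s φ hs.1.le hs.2
    have := d2.unique (d3.congr_of_eventuallyEq d4)
    simpa [map_add, map_smul] using this
  have e2 : (-Real.sin φ : ℝ) • a + (Real.cos φ) • b = ((1 / ϵ : ℝ) : ℂ) * deriv h φ := by
    have d1 : HasDerivAt (fun s => circ r s) ((r * -Real.sin φ) • (EuclideanSpace.single 0 1 : E2)
        + (r * Real.cos φ) • (EuclideanSpace.single 1 1 : E2)) φ := by
      simp only [circ_eq]
      exact (((Real.hasDerivAt_cos φ).const_mul r).smul_const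
        (EuclideanSpace.single 0 1 : E2)).add
        (((Real.hasDerivAt_sin φ).const_mul r).smul_const (EuclideanSpace.single 1 1 : E2))
    have d2 := hL.comp_hasDerivAt φ d1
    have d3 : HasDerivAt (fun s : ℝ => ((r / ϵ : ℝ) : ℂ) * h s)
        (((r / ϵ : ℝ) : ℂ) * deriv h φ) φ :=
      ((hsmooth.differentiable (by norm_num)) φ).hasDerivAt.const_mul _
    have d4 : (v ∘ fun s => circ r s) = (fun s : ℝ => ((r / ϵ : ℝ) : ℂ) * h s) := by
      funext s
      exact hv r s hr.le hr'
    rw [d4] at d2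
    have := d2.unique d3
    rw [map_add, map_smul, map_smul, ← ha, ← hb, mul_smul, mul_smul, ← smul_add] at this
    have hr0 : (r : ℂ) ≠ 0 := by exact_mod_cast hr.ne'
    rw [Complex.real_smul (x := r)] at this
    apply mul_left_cancel₀ hr0
    rw [this]
    push_cast
    ring
  have n1 : ‖h φ‖ ^ 2 / ϵ ^ 2 = ‖(Real.cos φ : ℝ) • a + (Real.sin φ) • b‖ ^ 2 := by
    rw [e1, norm_mul, Complex.norm_real, mul_pow, Real.norm_eq_abs, sq_abs]; ring
  have n2 : ‖deriv h φ‖ ^ 2 / ϵ ^ 2 = ‖(-Real.sin φ : ℝ) • a + (Real.cos φ) • b‖ ^ 2 := by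
    rw [e2, norm_mul, Complex.norm_real, mul_pow, Real.norm_eq_abs, sq_abs]; ring
  rw [add_div, n1, n2]
  apply le_of_eq
  simp only [Complex.sq_norm, Complex.normSq_apply, Complex.add_re, Complex.add_im,
    Complex.real_smul, Complex.re_ofReal_mul, Complex.im_ofReal_mul]
  linear_combination (-(a.re * a.re + a.im * a.im + b.re * b.re + b.im * b.im)) *
    Real.sin_sq_add_cos_sq φ

lemma integral_E2 (F : E2 → ℝ) :
    ∫ p, F p = ∫ q in Ioi (0:ℝ) ×ˢ Ioo (-π) π, q.1 * F (circ q.1 q.2) := by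
  have h1 := (EuclideanSpace.volume_preserving_symm_measurableEquiv_toLp (Fin 2)).symm
  have h2 := (volume_preserving_finTwoArrow ℝ).symm
  rw [← h1.integral_comp (MeasurableEquiv.measurableEmbedding _),
    ← h2.integral_comp (MeasurableEquiv.measurableEmbedding _),
    ← integral_comp_polarCoord_symm]
  simp only [polarCoord_target, smul_eq_mul]
  rfl

lemma norm_circ (r φ : ℝ) (hr : 0 < r) : ‖circ r φ‖ = r := by
  rw [circ, pt, EuclideanSpace.norm_eq]
  simp only [Fin.sum_univ_two, Real.norm_eq_abs, sq_abs]
  rw [Real.sqrt_eq_iff_mul_self_eq (by positivity) hr.le]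
  simp
  linear_combination (r ^ 2) * Real.sin_sq_add_cos_sq φ

/-- inequality (4.13) in the paper. Let `h : ℝ → ℂ` be continuously
differentiable and `2π`-periodic, and let `v` be the radially linear extension to the
open ball `B_ϵ` of the boundary values `h`, i.e. `v(r cos φ, r sin φ) = (r/ϵ) h(φ)` for
`0 ≤ r < ϵ`. Then `∫_{B_ϵ} |∇v|² ≤ 4 ∫₀^{2π} (|h|² + |h′|²)`. -/
theorem radial_extension_gradient_bound (ϵ : ℝ) (hϵ : 0 < ϵ) (h : ℝ → ℂ)
    (hsmooth : ContDiff ℝ 1 h) (hper : Function.Periodic h (2 * π)) (v : E2 → ℂ)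
    (hv : ∀ r φ : ℝ, 0 ≤ r → r < ϵ → 0 ≤ φ → φ < 2 * π →
      v (pt (r * Real.cos φ) (r * Real.sin φ)) = (r / ϵ : ℝ) * h φ) :
    ∫ p in Metric.ball (0 : E2) ϵ, gradSq v p
      ≤ 4 * ∫ φ in (0:ℝ)..(2 * π), (‖h φ‖ ^ 2 + ‖deriv h φ‖ ^ 2) := by
  have hv' := v_all ϵ h hper v hv
  have hg := gradSq_le ϵ hϵ h hsmooth v hv'
  set g : ℝ → ℝ := fun φ => ‖h φ‖ ^ 2 + ‖deriv h φ‖ ^ 2 with hgdef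
  have hgc : Continuous g := by
    have := hsmooth.continuous
    have := hsmooth.continuous_deriv (by norm_num)
    fun_prop
  have hdper : Function.Periodic (deriv h) (2 * π) := by
    intro x
    rw [← deriv_comp_add_const]
    congr 1
    funext y
    exact hper y
  have hgp : Function.Periodic g (2 * π) := by
    intro x
    simp only [hgdef, hper x, hdper x]
  have hg0 : ∀ φ, 0 ≤ g φ := fun φ => by simp only [hgdef]; positivity
  have hI : ∫ φ in Ioo (-π) π, g φ = ∫ φ in (0:ℝ)..(2 * π), g φ := by
    rw [← integral_Ioc_eq_integral_Ioo,
      ← intervalIntegral.integral_of_le (by linarith [Real.pi_pos])]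
    have := hgp.intervalIntegral_add_eq (-π) 0
    rw [show -π + 2 * π = π by ring, zero_add] at this
    exact this
  set k : ℝ → ℝ := (Iio ϵ).indicator (fun r => r / ϵ ^ 2) with hk
  have hkint : IntegrableOn k (Ioi 0) := by
    rw [hk, IntegrableOn, integrable_indicator_iff measurableSet_Iio, IntegrableOn,
      Measure.restrict_restrict measurableSet_Iio, Set.inter_comm, Ioi_inter_Iio]
    exact (Continuous.integrableOn_Icc (by fun_prop)).mono_set Ioo_subset_Icc_self
  have hkval : ∫ r in Ioi 0, k r = 1 / 2 := by
    rw [hk, integral_indicator measurableSet_Iio,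
      Measure.restrict_restrict measurableSet_Iio, Set.inter_comm, Ioi_inter_Iio,
      ← integral_Ioc_eq_integral_Ioo, ← intervalIntegral.integral_of_le hϵ.le,
      intervalIntegral.integral_div, integral_id]
    field_simp
    ring
  have hgint : IntegrableOn g (Ioo (-π) π) :=
    hgc.integrableOn_Icc.mono_set Ioo_subset_Icc_self
  have hJ0 : 0 ≤ ∫ φ in (0:ℝ)..(2 * π), g φ :=
    intervalIntegral.integral_nonneg (by positivity) fun φ _ => hg0 φ
  have hgs0 : ∀ p, 0 ≤ gradSq v p := fun p => by unfold gradSq; positivity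
  rw [← integral_indicator Metric.isOpen_ball.measurableSet, integral_E2]
  calc ∫ q in Ioi (0:ℝ) ×ˢ Ioo (-π) π,
        q.1 * (Metric.ball (0 : E2) ϵ).indicator (gradSq v) (circ q.1 q.2)
      ≤ ∫ q in Ioi (0:ℝ) ×ˢ Ioo (-π) π, k q.1 * g q.2 := by
        have hm : MeasurableSet (Ioi (0:ℝ) ×ˢ Ioo (-π) π) :=
          measurableSet_Ioi.prod measurableSet_Ioo
        apply integral_mono_of_nonneg
        · filter_upwards [ae_restrict_mem hm] with q hq
          exact mul_nonneg (le_of_lt hq.1) (Set.indicator_nonneg (fun p _ => hgs0 p) _)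
        · rw [Measure.volume_eq_prod, ← Measure.prod_restrict]
          exact Integrable.mul_prod hkint hgint
        · filter_upwards [ae_restrict_mem hm] with q hq
          have hq0 : 0 < q.1 := hq.1
          by_cases hlt : q.1 < ϵ
          · rw [Set.indicator_of_mem (by simpa [norm_circ _ _ hq0] using hlt), hk,
              Set.indicator_of_mem (show q.1 ∈ Iio ϵ from hlt)]
            calc _ ≤ q.1 * (g q.2 / ϵ ^ 2) :=
                  mul_le_mul_of_nonneg_left (hg q.1 q.2 hq0 hlt) hq0.le
              _ = _ := by ring
          · rw [Set.indicator_of_notMem (by simpa [norm_circ _ _ hq0] using hlt), hk,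
              Set.indicator_of_notMem (show q.1 ∉ Iio ϵ from hlt)]
            simp
    _ = 1 / 2 * ∫ φ in (0:ℝ)..(2 * π), g φ := by
        rw [Measure.volume_eq_prod, setIntegral_prod_mul, hkval, hI]
    _ ≤ _ := by linarith
end
end

section
/- Let Ω ⊂ ℝ² be a bounded open set every vertical section and every horizontal section of which is an interval. There exist C > 0 and ε₀ > 0, depending only on Ω and on a fixed point p ∈ Ω, with the following property. Let ε ∈ (0, ε₀), let K ⊂ B̄_ε be a compact set of Lebesgue measure zero such that Ω ∖ K satisfies property* (for every (x₀,y₀) ∈ Ω ∖ K, either the vertical line through (x₀,y₀) does not intersect K or the horizontal line through (x₀,y₀) does not intersect K), and suppose B̄_{2ε} ⊂ Ω. Then for every continuously differentiable u on Ω ∖ K with ‖u‖₁² := ∫_{Ω∖K} (|∇u|² + |u|²) dx dy < ∞ there exists ϵ ∈ (ε, 2ε) such that, with v defined by v := u on Ω ∖ B_ϵ and v(r cos φ, r sin φ) := (r/ϵ) u(ϵ cos φ, ϵ sin φ) for 0 ≤ r < ϵ, every function f that is twice continuously differentiable on Ω with f, |∇f|, Δf square-integrable on Ω and Re ∫_Ω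 (Δf)·conj(f) dx dy ≤ 0 satisfies |∫_{Ω∖K} ∇f · conj(∇v − ∇u) dx dy| ≤ C ε^{1/6} ( ∫_Ω |−Δf + f|² dx dy )^{1/2} · ‖u‖₁. -/
open MeasureTheory Real Set

noncomputable section

/-! ### Basic calculus with `pd` -/

lemma pd_contDiff {n : ℕ} {f : E2 → ℂ} (i : Fin 2) (hf : ContDiff ℝ (n + 1 : ℕ) f) :
    ContDiff ℝ n (pd i f) := by
  unfold pd
  exact (hf.fderiv_right (m := n) (by norm_cast)).clm_apply contDiff_const

lemma pd_compact {f : E2 → ℂ} (i : Fin 2) (hf : HasCompactSupport f) :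
    HasCompactSupport (pd i f) :=
  hf.fderiv_apply (𝕜 := ℝ) _

lemma pd_measurable (f : E2 → ℂ) (i : Fin 2) : Measurable (pd i f) :=
  measurable_fderiv_apply_const ℝ f _

lemma gradSq_measurable (f : E2 → ℂ) : Measurable (gradSq f) :=
  ((pd_measurable f 0).norm.pow_const 2).add ((pd_measurable f 1).norm.pow_const 2)

lemma lap_measurable (f : E2 → ℂ) : Measurable (lap f) :=
  (pd_measurable _ 0).add (pd_measurable _ 1)

lemma gradSq_nonneg (f : E2 → ℂ) (q : E2) : 0 ≤ gradSq f q := by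
  unfold gradSq; positivity

lemma pd_mul {a b : E2 → ℂ} {q : E2} (i : Fin 2) (ha : DifferentiableAt ℝ a q)
    (hb : DifferentiableAt ℝ b q) :
    pd i (fun x => a x * b x) q = pd i a q * b q + a q * pd i b q := by
  unfold pd
  rw [fderiv_fun_mul ha hb]
  simp
  ring

lemma pd_conj {a : E2 → ℂ} (i : Fin 2) (q : E2) :
    pd i (fun x => (starRingEnd ℂ) (a x)) q = (starRingEnd ℂ) (pd i a q) := by
  unfold pd
  have := (Complex.conjCLE : ℂ ≃L[ℝ] ℂ).comp_fderiv (f := a) (x := q)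
  have h2 : (fun x => (starRingEnd ℂ) (a x)) = (Complex.conjCLE : ℂ ≃L[ℝ] ℂ) ∘ a := by
    ext x; simp
  rw [h2, this]
  simp

lemma contDiff_conj {n : WithTop ℕ∞} {a : E2 → ℂ} (ha : ContDiff ℝ n a) :
    ContDiff ℝ n (fun x => (starRingEnd ℂ) (a x)) :=
  (Complex.conjCLE : ℂ ≃L[ℝ] ℂ).contDiff.comp ha

lemma compact_conj {a : E2 → ℂ} (ha : HasCompactSupport a) :
    HasCompactSupport (fun x => (starRingEnd ℂ) (a x)) :=
  ha.comp_left (g := starRingEnd ℂ) (map_zero _)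

lemma pd_add {a b : E2 → ℂ} {q : E2} (i : Fin 2) (ha : DifferentiableAt ℝ a q)
    (hb : DifferentiableAt ℝ b q) :
    pd i (fun x => a x + b x) q = pd i a q + pd i b q := by
  unfold pd
  rw [fderiv_fun_add ha hb]
  simp

lemma pd_congr {a b : E2 → ℂ} {q : E2} (i : Fin 2) (h : a =ᶠ[nhds q] b) :
    pd i a q = pd i b q := by
  unfold pd
  rw [h.fderiv_eq]

lemma pd_congr_ev {a b : E2 → ℂ} {q : E2} (i : Fin 2) (h : a =ᶠ[nhds q] b) :
    pd i a =ᶠ[nhds q] pd i b := by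
  filter_upwards [h.eventuallyEq_nhds] with x hx using pd_congr i hx

lemma gradSq_congr {a b : E2 → ℂ} {q : E2} (h : a =ᶠ[nhds q] b) :
    gradSq a q = gradSq b q := by
  unfold gradSq; rw [pd_congr 0 h, pd_congr 1 h]

lemma lap_congr {a b : E2 → ℂ} {q : E2} (h : a =ᶠ[nhds q] b) :
    lap a q = lap b q := by
  unfold lap; rw [pd_congr 0 (pd_congr_ev 0 h), pd_congr 1 (pd_congr_ev 1 h)]

lemma pd_comm {h : E2 → ℂ} (hh : ContDiff ℝ 2 h) (q : E2) (i j : Fin 2) :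
    pd i (pd j h) q = pd j (pd i h) q := by
  have hs : IsSymmSndFDerivAt ℝ h q := hh.contDiffAt.isSymmSndFDerivAt (by simp)
  have hd : DifferentiableAt ℝ (fderiv ℝ h) q :=
    ((hh.fderiv_right (m := 1) (by norm_num)).differentiable (by norm_num)) q
  have key : ∀ a b : Fin 2, pd a (pd b h) q
      = fderiv ℝ (fderiv ℝ h) q (EuclideanSpace.single a 1) (EuclideanSpace.single b 1) := by
    intro a b
    unfold pd
    rw [fderiv_clm_apply hd (differentiableAt_const _)]
    simp
  rw [key, key]
  exact hs _ _

lemma lap_mul {a b : E2 → ℂ} (ha : ContDiff ℝ 2 a) (hb : ContDiff ℝ 2 b) (q : E2) :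
    lap (fun x => a x * b x) q = lap a q * b q + a q * lap b q
      + 2 * (pd 0 a q * pd 0 b q + pd 1 a q * pd 1 b q) := by
  have ha1 : Differentiable ℝ a := ha.differentiable (by norm_num)
  have hb1 : Differentiable ℝ b := hb.differentiable (by norm_num)
  have ha2 : ∀ i, Differentiable ℝ (pd i a) := fun i =>
    (pd_contDiff (n := 1) i ha).differentiable (by norm_num)
  have hb2 : ∀ i, Differentiable ℝ (pd i b) := fun i =>
    (pd_contDiff (n := 1) i hb).differentiable (by norm_num)
  have key : ∀ i, pd i (pd i (fun x => a x * b x)) q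
      = pd i (pd i a) q * b q + a q * pd i (pd i b) q + 2 * (pd i a q * pd i b q) := by
    intro i
    have : pd i (fun x => a x * b x) = fun x => pd i a x * b x + a x * pd i b x := by
      ext x; exact pd_mul i (ha1 x) (hb1 x)
    rw [this, pd_add i ((ha2 i q).fun_mul (hb1 q)) ((ha1 q).fun_mul (hb2 i q)),
      pd_mul i (ha2 i q) (hb1 q), pd_mul i (ha1 q) (hb2 i q)]
    ring
  unfold lap
  rw [key, key]; ring

lemma lap_conj (a : E2 → ℂ) (q : E2) :
    lap (fun x => (starRingEnd ℂ) (a x)) q = (starRingEnd ℂ) (lap a q) := by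
  unfold lap
  have : ∀ i, pd i (fun x => (starRingEnd ℂ) (a x)) = fun x => (starRingEnd ℂ) (pd i a x) := by
    intro i; ext x; exact pd_conj i x
  rw [this, this, pd_conj, pd_conj, map_add]

lemma lap_continuous {a : E2 → ℂ} (ha : ContDiff ℝ 2 a) : Continuous (lap a) :=
  (pd_contDiff (n := 0) 0 (pd_contDiff (n := 1) 0 ha)).continuous.add
    (pd_contDiff (n := 0) 1 (pd_contDiff (n := 1) 1 ha)).continuous

lemma lap_compact {a : E2 → ℂ} (ha : HasCompactSupport a) : HasCompactSupport (lap a) :=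
  (pd_compact 0 (pd_compact 0 ha)).add (pd_compact 1 (pd_compact 1 ha))

lemma pd_continuous {a : E2 → ℂ} (i : Fin 2) (ha : ContDiff ℝ 1 a) : Continuous (pd i a) :=
  (pd_contDiff (n := 0) i ha).continuous

/-! ### Integration by parts -/

lemma ibp {a b : E2 → ℂ} (i : Fin 2) (ha : ContDiff ℝ 1 a) (hb : ContDiff ℝ 1 b)
    (hc : HasCompactSupport a) :
    ∫ q, a q * pd i b q = - ∫ q, pd i a q * b q := by
  unfold pd
  have ca := ha.continuous
  have cb := hb.continuous
  have cpa := pd_continuous i ha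
  have cpb := pd_continuous i hb
  apply integral_mul_fderiv_eq_neg_fderiv_mul_of_integrable
  · exact (cpa.mul cb).integrable_of_hasCompactSupport ((pd_compact i hc).mul_right)
  · exact (ca.mul cpb).integrable_of_hasCompactSupport hc.mul_right
  · exact (ca.mul cb).integrable_of_hasCompactSupport hc.mul_right
  · intro x _; exact (ha.differentiable (by norm_num)) x
  · intro x _; exact (hb.differentiable (by norm_num)) x

lemma pd_translate (a : E2 → ℂ) (i : Fin 2) (w q : E2) :
    pd i (fun x => a (x + w)) q = pd i a (q + w) := by
  unfold pd
  rw [fderiv_comp_add_right]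

lemma pd_diff_quot {a : E2 → ℂ} (ha : ContDiff ℝ 1 a) (i : Fin 2) (w q : E2) (c : ℂ) :
    pd i (fun x => c * (a (x + w) - a x)) q = c * (pd i a (q + w) - pd i a q) := by
  have h1 : Differentiable ℝ a := ha.differentiable (by norm_num)
  have h2 : Differentiable ℝ (fun x => a (x + w)) := h1.comp (differentiable_id.add_const w)
  have h3 := pd_translate a i w q
  unfold pd at *
  rw [fderiv_const_mul ((h2 q).fun_sub (h1 q)), fderiv_fun_sub (h2 q) (h1 q)]
  simp [h3]

lemma diff_quot_tendsto {b : E2 → ℂ} (hb : ContDiff ℝ 1 b) (i : Fin 2) (q : E2) (s : ℝ) (hs : s ≠ 0) :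
    Filter.Tendsto (fun n : ℕ => ((((n : ℝ) + 1) * s : ℝ) : ℂ) *
      (b (q + ((((n : ℝ) + 1) * s)⁻¹) • (EuclideanSpace.single i 1 : E2)) - b q))
      Filter.atTop (nhds (pd i b q)) := by
  have hd : HasFDerivAt b (fderiv ℝ b q) q :=
    ((hb.differentiable (by norm_num)) q).hasFDerivAt
  have hl := (hd.hasLineDerivAt (EuclideanSpace.single i 1)).tendsto_slope_zero
  have ht : Filter.Tendsto (fun n : ℕ => (((n : ℝ) + 1) * s)⁻¹) Filter.atTop
      (nhdsWithin 0 {0}ᶜ) := by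
    apply tendsto_nhdsWithin_iff.2
    constructor
    · have := (tendsto_one_div_add_atTop_nhds_zero_nat (𝕜 := ℝ)).mul_const (s⁻¹)
      simpa [mul_inv, mul_comm] using this
    · filter_upwards with n
      simp only [mem_compl_iff, mem_singleton_iff, inv_eq_zero, mul_eq_zero, not_or]
      exact ⟨by positivity, hs⟩
  have := hl.comp ht
  refine this.congr ?_
  intro n
  simp

/-- mixed derivative identity -/
lemma swap_ibp {a b : E2 → ℂ} (i j : Fin 2) (ha : ContDiff ℝ 1 a) (hb : ContDiff ℝ 1 b)
    (hca : HasCompactSupport a) (hcb : HasCompactSupport b) :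
    ∫ q, pd i a q * pd j b q = ∫ q, pd j a q * pd i b q := by
  set e : E2 := EuclideanSpace.single j 1 with he
  have hen : ‖e‖ = 1 := by simp [he]
  obtain ⟨La, hLa⟩ := ContDiff.lipschitzWith_of_hasCompactSupport hca ha (by norm_num)
  obtain ⟨Lb, hLb⟩ := ContDiff.lipschitzWith_of_hasCompactSupport hcb hb (by norm_num)
  have quot_bound : ∀ (g : E2 → ℂ) (L : NNReal), LipschitzWith L g → ∀ (t : ℝ) (q : E2), t ≠ 0 →
      ‖(t : ℂ) * (g (q + t⁻¹ • e) - g q)‖ ≤ L := by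
    intro g L hL t q ht
    rw [norm_mul]
    have h1 := hL.norm_sub_le (q + t⁻¹ • e) q
    simp only [add_sub_cancel_left, norm_smul, hen, mul_one, norm_inv] at h1
    have h2 : 0 < ‖t‖ := norm_pos_iff.2 ht
    calc ‖(t : ℂ)‖ * ‖g (q + t⁻¹ • e) - g q‖ ≤ ‖t‖ * (L * ‖t‖⁻¹) := by
          rw [Complex.norm_real]; gcongr
      _ = L := by field_simp
  have cia := pd_continuous i ha
  have cib := pd_continuous i hb
  -- left-hand limits
  have T1 : Filter.Tendsto (fun n : ℕ => ∫ q, pd i a q * (((((n : ℝ) + 1) * 1 : ℝ) : ℂ) *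
      (b (q + ((((n : ℝ) + 1) * 1)⁻¹) • e) - b q))) Filter.atTop
      (nhds (∫ q, pd i a q * pd j b q)) := by
    apply tendsto_integral_of_dominated_convergence (fun q => ‖pd i a q‖ * Lb)
    · intro n
      have cb := hb.continuous
      exact (by fun_prop : Continuous _).aestronglyMeasurable
    · exact (cia.integrable_of_hasCompactSupport (pd_compact i hca)).norm.mul_const _
    · intro n
      filter_upwards with q
      rw [norm_mul]
      gcongr
      exact quot_bound b Lb hLb _ q (by positivity)
    · filter_upwards with q
      exact (diff_quot_tendsto hb j q 1 one_ne_zero).const_mul _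
  have T2 : Filter.Tendsto (fun n : ℕ => ∫ q, (((((n : ℝ) + 1) * (-1) : ℝ) : ℂ) *
      (a (q + ((((n : ℝ) + 1) * (-1))⁻¹) • e) - a q)) * pd i b q) Filter.atTop
      (nhds (∫ q, pd j a q * pd i b q)) := by
    apply tendsto_integral_of_dominated_convergence (fun q => La * ‖pd i b q‖)
    · intro n
      have ca := ha.continuous
      exact (by fun_prop : Continuous _).aestronglyMeasurable
    · exact (cib.integrable_of_hasCompactSupport (pd_compact i hcb)).norm.const_mul _
    · intro n
      filter_upwards with q
      rw [norm_mul]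
      gcongr
      exact quot_bound a La hLa _ q
        (mul_ne_zero (by positivity) (by norm_num))
    · filter_upwards with q
      exact (diff_quot_tendsto ha j q (-1) (by norm_num)).mul_const _
  refine tendsto_nhds_unique T1 (T2.congr ?_)
  intro n
  set t : ℝ := ((n : ℝ) + 1) with ht
  have htw : (t * (-1))⁻¹ = -t⁻¹ := by rw [mul_neg, mul_one, neg_inv]
  rw [htw, mul_one]
  have cb := hb.continuous
  have ca := ha.continuous
  have hcd : ContDiff ℝ 1 (fun q => (t : ℂ) * (b (q + t⁻¹ • e) - b q)) :=
    contDiff_const.mul ((hb.comp (contDiff_id.add contDiff_const)).sub hb)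
  have h1 := ibp i ha hcd hca
  have h2 : ∀ q, pd i (fun q => (t : ℂ) * (b (q + t⁻¹ • e) - b q)) q
      = t * (pd i b (q + t⁻¹ • e) - pd i b q) := fun q => pd_diff_quot hb i _ q _
  simp_rw [h2] at h1
  rw [eq_comm, neg_eq_iff_eq_neg] at h1
  rw [h1]
  have I1 : Integrable (fun q => a q * pd i b q) :=
    (ca.mul cib).integrable_of_hasCompactSupport hca.mul_right
  have I2 : Integrable (fun q => a q * pd i b (q + t⁻¹ • e)) :=
    (ca.mul (by fun_prop : Continuous fun q => pd i b (q + t⁻¹ • e))).integrable_of_hasCompactSupport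
      hca.mul_right
  have I3 : Integrable (fun q => a (q + -t⁻¹ • e) * pd i b q) :=
    ((by fun_prop : Continuous fun q => a (q + -t⁻¹ • e)).mul cib).integrable_of_hasCompactSupport
      (pd_compact i hcb).mul_left
  have e1 : ∫ q, a q * ((t : ℂ) * (pd i b (q + t⁻¹ • e) - pd i b q))
      = t * (∫ q, a q * pd i b (q + t⁻¹ • e)) - t * ∫ q, a q * pd i b q := by
    rw [← integral_const_mul, ← integral_const_mul, ← integral_sub (I2.const_mul _) (I1.const_mul _)]
    congr 1; ext q; ring
  have e2 : ∫ q, ((t * (-1) : ℝ) : ℂ) * (a (q + -t⁻¹ • e) - a q) * pd i b q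
      = - (t * (∫ q, a (q + -t⁻¹ • e) * pd i b q) - t * ∫ q, a q * pd i b q) := by
    rw [← integral_const_mul, ← integral_const_mul, ← integral_sub (I3.const_mul _) (I1.const_mul _),
      ← integral_neg]
    congr 1; ext q; push_cast; ring
  have e3 : ∫ q, a q * pd i b (q + t⁻¹ • e) = ∫ q, a (q + -t⁻¹ • e) * pd i b q := by
    rw [← integral_add_right_eq_self _ (-t⁻¹ • e)]
    congr 1; ext q
    simp [add_assoc]
  rw [e1, e2, e3]

lemma sq_integrable {A : E2 → ℂ} (cA : Continuous A) (kA : HasCompactSupport A) :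
    Integrable (fun q => ‖A q‖ ^ 2) :=
  (by fun_prop : Continuous (fun q => ‖A q‖ ^ 2)).integrable_of_hasCompactSupport
      (kA.comp_left (g := fun z => ‖z‖ ^ 2) (by simp))

lemma hess_aux {A B D : E2 → ℂ} (cA : Continuous A) (cB : Continuous B) (cD : Continuous D)
    (kA : HasCompactSupport A) (kB : HasCompactSupport B) (kD : HasCompactSupport D)
    (h : ∫ q, A q * (starRingEnd ℂ) (B q) = ∫ q, D q * (starRingEnd ℂ) (D q)) :
    ∫ q, ((‖A q‖ ^ 2 + ‖B q‖ ^ 2) + 2 * ‖D q‖ ^ 2) = ∫ q, ‖A q + B q‖ ^ 2 := by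
  have Z1 : Integrable (fun q => A q * (starRingEnd ℂ) (B q)) :=
    (cA.mul (Complex.continuous_conj.comp cB)).integrable_of_hasCompactSupport kA.mul_right
  have Z2 : Integrable (fun q => D q * (starRingEnd ℂ) (D q)) :=
    (cD.mul (Complex.continuous_conj.comp cD)).integrable_of_hasCompactSupport kD.mul_right
  have hr : ∫ q, (A q * (starRingEnd ℂ) (B q)).re = ∫ q, ‖D q‖ ^ 2 := by
    have h3 := congrArg Complex.re h
    have r1 := integral_re Z1
    have r2 := integral_re Z2
    simp only [RCLike.re_eq_complex_re] at r1 r2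
    rw [r1, h3, ← r2]
    congr 1; ext q
    rw [Complex.mul_conj, Complex.normSq_eq_norm_sq]
    norm_cast
  have JA := sq_integrable cA kA
  have JB := sq_integrable cB kB
  have JD := sq_integrable cD kD
  have JAB : Integrable (fun q => ‖A q‖ ^ 2 + ‖B q‖ ^ 2) := JA.add JB
  have Jr : Integrable (fun q => (A q * (starRingEnd ℂ) (B q)).re) := Z1.re
  have eR : ∀ q, ‖A q + B q‖ ^ 2 = (‖A q‖ ^ 2 + ‖B q‖ ^ 2)
      + 2 * (A q * (starRingEnd ℂ) (B q)).re := by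
    intro q
    rw [← Complex.normSq_eq_norm_sq, Complex.normSq_add, Complex.normSq_eq_norm_sq,
      Complex.normSq_eq_norm_sq]
  simp_rw [eR]
  rw [integral_add JAB (JD.const_mul 2), integral_add JAB (Jr.const_mul 2), integral_const_mul,
    integral_const_mul, hr]

/-- `∫ |D²h|² = ∫ |Δh|²` -/
lemma hess_identity {h : E2 → ℂ} (hh : ContDiff ℝ 2 h) (hc : HasCompactSupport h) :
    ∫ q, (gradSq (pd 0 h) q + gradSq (pd 1 h) q) = ∫ q, ‖lap h q‖ ^ 2 := by
  have c1 : ∀ i, ContDiff ℝ 1 (pd i h) := fun i => pd_contDiff (n := 1) i hh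
  have hs := swap_ibp 0 1 (c1 0) (contDiff_conj (c1 1)) (pd_compact 0 hc)
    (compact_conj (pd_compact 1 hc))
  simp only [pd_conj] at hs
  have eL : ∀ q, gradSq (pd 0 h) q + gradSq (pd 1 h) q
      = (‖pd 0 (pd 0 h) q‖ ^ 2 + ‖pd 1 (pd 1 h) q‖ ^ 2) + 2 * ‖pd 0 (pd 1 h) q‖ ^ 2 := by
    intro q; unfold gradSq; rw [pd_comm hh q 1 0]; ring
  simp_rw [eL]
  unfold lap
  refine hess_aux (pd_continuous 0 (c1 0)) (pd_continuous 1 (c1 1)) (pd_continuous 0 (c1 1))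
    (pd_compact 0 (pd_compact 0 hc)) (pd_compact 1 (pd_compact 1 hc))
    (pd_compact 0 (pd_compact 1 hc)) ?_
  rw [hs]
  congr 1; ext q
  rw [pd_comm hh q 1 0]

/-- Caccioppoli identity -/
lemma caccioppoli {F η : E2 → ℂ} (hF : ContDiff ℝ 2 F) (hη : ContDiff ℝ 2 η)
    (hc : HasCompactSupport η) :
    ∫ q, η q * lap (fun x => F x * (starRingEnd ℂ) (F x)) q
      = ∫ q, lap η q * (F q * (starRingEnd ℂ) (F q)) := by
  set w : E2 → ℂ := fun x => F x * (starRingEnd ℂ) (F x) with hw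
  have hw2 : ContDiff ℝ 2 w := hF.mul (contDiff_conj hF)
  have hη1 : ContDiff ℝ 1 η := hη.of_le (by norm_num)
  have hw1 : ContDiff ℝ 1 w := hw2.of_le (by norm_num)
  have cw1 : ∀ i, ContDiff ℝ 1 (pd i w) := fun i => pd_contDiff (n := 1) i hw2
  have cη1 : ∀ i, ContDiff ℝ 1 (pd i η) := fun i => pd_contDiff (n := 1) i hη
  have key : ∀ i, ∫ q, η q * pd i (pd i w) q = ∫ q, pd i (pd i η) q * w q := by
    intro i
    rw [ibp i hη1 (cw1 i) hc, ibp i (cη1 i) hw1 (pd_compact i hc), neg_neg]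
  unfold lap
  have I1 : ∀ i, Integrable fun q => η q * pd i (pd i w) q := fun i =>
    (hη.continuous.mul (pd_continuous i (cw1 i))).integrable_of_hasCompactSupport hc.mul_right
  have I2 : ∀ i, Integrable fun q => pd i (pd i η) q * w q := fun i =>
    ((pd_continuous i (cη1 i)).mul hw2.continuous).integrable_of_hasCompactSupport
      (pd_compact i (pd_compact i hc)).mul_right
  simp_rw [mul_add, add_mul]
  rw [integral_add (I1 0) (I1 1), integral_add (I2 0) (I2 1), key, key]

lemma sq_lintegral_eq {G : Type*} [NormedAddCommGroup G] (g : E2 → G) (μ : Measure E2) :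
    ∫⁻ q, ‖g q‖ₑ ^ 2 ∂μ = (eLpNorm g 2 μ) ^ 2 := by
  have := eLpNorm_nnreal_pow_eq_lintegral (f := g) (μ := μ) (p := 2) (by norm_num)
  have h2 : ((2 : NNReal) : ENNReal) = 2 := rfl
  rw [h2] at this
  have h3 : ((2 : NNReal) : ℝ) = 2 := rfl
  rw [h3] at this
  simp only [ENNReal.rpow_two] at this
  exact this.symm

lemma eLpNorm_compare {G : Type*} [NormedAddCommGroup G] {g : E2 → G} (hg : Continuous g)
    (S : Set E2) (a b : NNReal) (hab : a ≤ b) :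
    eLpNorm g a (volume.restrict S)
      ≤ eLpNorm g b volume * volume S ^ (1 / (a : ℝ) - 1 / (b : ℝ)) := by
  have := eLpNorm_le_eLpNorm_mul_rpow_measure_univ (p := (a : ENNReal)) (q := (b : ENNReal)) (f := g)
    (μ := volume.restrict S) (by exact_mod_cast hab) hg.aestronglyMeasurable
  rw [Measure.restrict_apply_univ] at this
  simp only [ENNReal.coe_toReal] at this
  refine this.trans ?_
  gcongr
  exact Measure.restrict_le_self

lemma ball_vol_rpow (p : E2) {r : ℝ} (hr : 0 < r) :
    volume (Metric.ball p r) ^ ((1:ℝ)/4) = ENNReal.ofReal r ^ ((1:ℝ)/2) *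
      (volume (Metric.ball (0 : E2) 1)) ^ ((1 : ℝ) / 4) := by
  rw [Measure.addHaar_ball_of_pos volume p hr,
    ENNReal.mul_rpow_of_nonneg _ _ (by norm_num : (0:ℝ) ≤ 1/4),
    finrank_euclideanSpace_fin, ENNReal.ofReal_pow hr.le, ← ENNReal.rpow_natCast,
    ← ENNReal.rpow_mul]
  norm_num

lemma sob_h3 {g : E2 → ℂ} (hg : ContDiff ℝ 1 g) (p : E2) (s : ℝ)
    (hs : Function.support g ⊆ Metric.closedBall p s) :
    eLpNorm (fderiv ℝ g) ((4/3 : NNReal) : ENNReal) volume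
      ≤ eLpNorm (fderiv ℝ g) ((2 : NNReal) : ENNReal) volume
        * (volume (Metric.closedBall p s)) ^ ((1 : ℝ) / 4) := by
  have hdc : Continuous (fderiv ℝ g) := hg.continuous_fderiv (by norm_num)
  have hsupp : Function.support (fderiv ℝ g) ⊆ Metric.closedBall p s :=
    (support_fderiv_subset ℝ).trans (closure_minimal hs Metric.isClosed_closedBall)
  have h1 := eLpNorm_restrict_eq_of_support_subset (μ := (volume : Measure E2))
    (p := ((4/3 : NNReal) : ENNReal)) (f := fderiv ℝ g) hsupp
  have h2 := eLpNorm_compare hdc (Metric.closedBall p s) (4/3) 2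
    (by rw [← NNReal.coe_le_coe]; norm_num)
  have h3 : (1 / ((4/3 : NNReal) : ℝ) - 1 / ((2 : NNReal) : ℝ)) = (1:ℝ)/4 := by norm_num
  rw [h3, h1] at h2
  exact h2

lemma sob_h2 {g : E2 → ℂ} (hg : ContDiff ℝ 1 g) (p : E2) (s : ℝ)
    (hs : Function.support g ⊆ Metric.closedBall p s) :
    eLpNorm g ((4 : NNReal) : ENNReal) volume ≤
      ((eLpNormLESNormFDerivOfLeConst ℂ (volume : Measure E2) (Metric.closedBall p s) (4/3) 4 : NNReal) :
      ENNReal) * eLpNorm (fderiv ℝ g) ((4/3 : NNReal) : ENNReal) volume :=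
  eLpNorm_le_eLpNorm_fderiv_of_le (μ := (volume : Measure E2)) (F := ℂ) hg hs
      (p := 4/3) (q := 4) (by rw [← NNReal.coe_le_coe]; norm_num)
      (by rw [finrank_euclideanSpace_fin, ← NNReal.coe_lt_coe]; norm_num)
      (by rw [finrank_euclideanSpace_fin]; norm_num) Metric.isBounded_closedBall

/-- Sobolev type estimate on small balls. -/
lemma sobolev_small_ball (p : E2) (s : ℝ) :
    ∃ C : ENNReal, C ≠ ⊤ ∧ ∀ g : E2 → ℂ, ContDiff ℝ 1 g → Function.support g ⊆ Metric.closedBall p s →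
      ∀ r : ℝ, 0 < r → ∫⁻ q in Metric.ball p r, ‖g q‖ₑ ^ 2
        ≤ C * ENNReal.ofReal r * ∫⁻ q, ‖fderiv ℝ g q‖ₑ ^ 2 := by
  have H2 := fun g hg hs => @sob_h2 g hg p s hs
  generalize hC1 : ((eLpNormLESNormFDerivOfLeConst ℂ (volume : Measure E2) (Metric.closedBall p s)
      (4/3) 4 : NNReal) : ENNReal) = C1 at H2
  have hC1t : C1 ≠ ⊤ := by rw [← hC1]; exact ENNReal.coe_ne_top
  have H3 := fun g hg hs => @sob_h3 g hg p s hs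
  have hVt : (volume (Metric.closedBall p s)) ^ ((1 : ℝ) / 4) ≠ ⊤ :=
    ENNReal.rpow_ne_top_of_nonneg (by norm_num) ((isCompact_closedBall p s).measure_lt_top.ne)
  generalize (volume (Metric.closedBall p s)) ^ ((1 : ℝ) / 4) = V at H3 hVt
  have H1 := fun r hr => @ball_vol_rpow p r hr
  have hWt : (volume (Metric.ball (0 : E2) 1)) ^ ((1 : ℝ) / 4) ≠ ⊤ :=
    ENNReal.rpow_ne_top_of_nonneg (by norm_num) (measure_ball_lt_top.ne)
  generalize (volume (Metric.ball (0 : E2) 1)) ^ ((1 : ℝ) / 4) = W at H1 hWt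
  refine ⟨(C1 * V * W) ^ 2,
    ENNReal.pow_ne_top (ENNReal.mul_ne_top (ENNReal.mul_ne_top hC1t hVt) hWt), ?_⟩
  intro g hg hs r hr
  have h1 := eLpNorm_compare hg.continuous (Metric.ball p r) 2 4
    (by rw [← NNReal.coe_le_coe]; norm_num)
  have h3 : (1 / ((2 : NNReal) : ℝ) - 1 / ((4 : NNReal) : ℝ)) = (1:ℝ)/4 := by norm_num
  rw [h3, H1 r hr] at h1
  have h4 := H2 g hg hs
  have h5 := H3 g hg hs
  rw [sq_lintegral_eq, sq_lintegral_eq]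
  have e2 : ((2 : NNReal) : ENNReal) = 2 := rfl
  rw [e2] at h1 h5
  generalize eLpNorm g 2 (volume.restrict (Metric.ball p r)) = N1 at *
  generalize eLpNorm g ((4 : NNReal) : ENNReal) volume = N2 at *
  generalize eLpNorm (fderiv ℝ g) ((4/3 : NNReal) : ENNReal) volume = N3 at *
  generalize eLpNorm (fderiv ℝ g) 2 volume = N4 at *
  calc N1 ^ 2
      ≤ (C1 * (N4 * V) * (ENNReal.ofReal r ^ ((1:ℝ)/2) * W)) ^ 2 := by
        gcongr
        refine h1.trans ?_
        gcongr
        exact h4.trans (by gcongr)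
    _ = (C1 * V * W) ^ 2 * (ENNReal.ofReal r ^ ((1:ℝ)/2)) ^ 2 * N4 ^ 2 := by
        ring
    _ = _ := by
        congr 2
        rw [← ENNReal.rpow_natCast, ← ENNReal.rpow_mul]
        norm_num

lemma E2_decomp (w : E2) :
    w = (w 0) • (EuclideanSpace.single 0 1 : E2) + (w 1) • (EuclideanSpace.single 1 1 : E2) := by
  ext i; fin_cases i <;> simp

lemma norm_apply_sq_le (g : E2 → ℂ) (q w : E2) :
    ‖fderiv ℝ g q w‖ ^ 2 ≤ gradSq g q * ‖w‖ ^ 2 := by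
  have h1 : fderiv ℝ g q w = (w 0) • pd 0 g q + (w 1) • pd 1 g q := by
    conv_lhs => rw [E2_decomp w]
    simp only [map_add, map_smul, pd]
  have h2 : ‖fderiv ℝ g q w‖ ≤ |w 0| * ‖pd 0 g q‖ + |w 1| * ‖pd 1 g q‖ := by
    rw [h1]
    refine (norm_add_le _ _).trans ?_
    rw [norm_smul, norm_smul]; rfl
  have h3 : ‖w‖ ^ 2 = |w 0| ^ 2 + |w 1| ^ 2 := by
    rw [EuclideanSpace.norm_sq_eq]; simp
  rw [h3, gradSq]
  calc ‖fderiv ℝ g q w‖ ^ 2 ≤ (|w 0| * ‖pd 0 g q‖ + |w 1| * ‖pd 1 g q‖) ^ 2 := by gcongr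
    _ ≤ _ := by nlinarith [sq_nonneg (|w 0| * ‖pd 1 g q‖ - |w 1| * ‖pd 0 g q‖)]

lemma norm_fderiv_le (g : E2 → ℂ) (q : E2) : ‖fderiv ℝ g q‖ ≤ √(gradSq g q) := by
  apply ContinuousLinearMap.opNorm_le_bound _ (Real.sqrt_nonneg _)
  intro w
  have := norm_apply_sq_le g q w
  rw [← Real.sqrt_sq (norm_nonneg (fderiv ℝ g q w)), ← Real.sqrt_sq (norm_nonneg w),
    ← Real.sqrt_mul (gradSq_nonneg _ _)]
  exact Real.sqrt_le_sqrt this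

lemma norm_fderiv_sq_le (g : E2 → ℂ) (q : E2) : ‖fderiv ℝ g q‖ ^ 2 ≤ gradSq g q := by
  have := norm_fderiv_le g q
  calc ‖fderiv ℝ g q‖ ^ 2 ≤ (√(gradSq g q)) ^ 2 := by gcongr
    _ = _ := Real.sq_sqrt (gradSq_nonneg _ _)

lemma enorm_sq_ofReal {G : Type*} [NormedAddCommGroup G] (x : G) :
    ‖x‖ₑ ^ 2 = ENNReal.ofReal (‖x‖ ^ 2) := by
  rw [ENNReal.ofReal_pow (norm_nonneg _), ofReal_norm]

lemma exists_cutoff (p : E2) {s t : ℝ} (hs : 0 < s) (hst : s < t) :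
    ∃ χ : E2 → ℂ, ContDiff ℝ 2 χ ∧ HasCompactSupport χ ∧ tsupport χ ⊆ Metric.closedBall p t ∧
      (∀ q ∈ Metric.closedBall p s, χ q = 1) ∧ (∀ q, ∃ c : ℝ, 0 ≤ c ∧ c ≤ 1 ∧ χ q = c) := by
  let b : ContDiffBump p := ⟨s, t, hs, hst⟩
  refine ⟨fun q => ((b q : ℝ) : ℂ), Complex.ofRealCLM.contDiff.comp b.contDiff,
    b.hasCompactSupport.comp_left (g := fun x : ℝ => (x : ℂ)) (by simp), ?_, ?_, ?_⟩
  · have : tsupport (fun q => ((b q : ℝ) : ℂ)) ⊆ tsupport b :=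
      closure_mono (fun q hq => by
        simp only [Function.mem_support, ne_eq, Complex.ofReal_eq_zero] at hq ⊢
        exact hq)
    exact this.trans b.tsupport_eq.subset
  · intro q hq
    simp [b.one_of_mem_closedBall hq]
  · intro q
    exact ⟨b q, b.nonneg, b.le_one, rfl⟩

lemma exists_bound {g : E2 → ℂ} (hg : Continuous g) (hc : HasCompactSupport g) :
    ∃ M : ℝ, 0 ≤ M ∧ ∀ q, ‖g q‖ ≤ M := by
  obtain ⟨M, hM⟩ := hg.bounded_above_of_compact_support hc
  exact ⟨M, (norm_nonneg _).trans (hM 0), hM⟩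

lemma gradSq_continuous {F : E2 → ℂ} (hF : ContDiff ℝ 1 F) : Continuous (gradSq F) := by
  have h0 := pd_continuous 0 hF
  have h1 := pd_continuous 1 hF
  unfold gradSq
  fun_prop

lemma lap_normSq {F : E2 → ℂ} (hF : ContDiff ℝ 2 F) (q : E2) :
    (lap (fun x => F x * (starRingEnd ℂ) (F x)) q).re
      = 2 * gradSq F q + 2 * (lap F q * (starRingEnd ℂ) (F q)).re := by
  rw [lap_mul hF (contDiff_conj hF), lap_conj, pd_conj, pd_conj]
  simp only [Complex.mul_conj, Complex.normSq_eq_norm_sq, gradSq]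
  simp only [Complex.add_re, Complex.mul_re, Complex.conj_re, Complex.conj_im]
  norm_cast
  simp
  ring

/-- interior gradient estimate -/
lemma interior_grad (p : E2) {s t : ℝ} (hs : 0 < s) (hst : s < t) :
    ∃ C : ℝ, 0 ≤ C ∧ ∀ F : E2 → ℂ, ContDiff ℝ 2 F →
      ∫ q in Metric.closedBall p s, gradSq F q
        ≤ C * ∫ q in Metric.closedBall p t, (‖F q‖ ^ 2 + ‖lap F q‖ ^ 2) := by
  obtain ⟨η, hη, hηc, hηs, hη1, hηr⟩ := exists_cutoff p hs hst
  obtain ⟨M, hM0, hM⟩ := exists_bound (lap_continuous hη) (lap_compact hηc)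
  refine ⟨M + 1, by positivity, ?_⟩
  intro F hF
  have hF1 : ContDiff ℝ 1 F := hF.of_le (by norm_num)
  have cg := gradSq_continuous hF1
  have cl := lap_continuous hF
  have cF := hF.continuous
  have cη := hη.continuous
  have clη := lap_continuous hη
  have cw : Continuous (lap (fun x => F x * (starRingEnd ℂ) (F x))) :=
    lap_continuous (hF.mul (contDiff_conj hF))
  have key := caccioppoli hF hη hηc
  have kre := congrArg Complex.re key
  have I1 : Integrable (fun q => η q * lap (fun x => F x * (starRingEnd ℂ) (F x)) q) :=
    (cη.mul cw).integrable_of_hasCompactSupport hηc.mul_right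
  have I2 : Integrable (fun q => lap η q * (F q * (starRingEnd ℂ) (F q))) :=
    (clη.mul (cF.mul (Complex.continuous_conj.comp cF))).integrable_of_hasCompactSupport
      (lap_compact hηc).mul_right
  have r1 := integral_re I1
  have r2 := integral_re I2
  simp only [RCLike.re_eq_complex_re] at r1 r2
  rw [← r1, ← r2] at kre
  set T := Metric.closedBall p t
  have hTm : MeasurableSet T := Metric.isClosed_closedBall.measurableSet
  have hTc : IsCompact T := isCompact_closedBall p t
  have z1 : ∀ q, q ∉ T → η q = 0 := fun q hq => image_eq_zero_of_notMem_tsupport (fun h => hq (hηs h))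
  have hlapsupp : ∀ q, q ∉ T → lap η q = 0 := by
    intro q hq
    have : η =ᶠ[nhds q] fun _ => 0 := by
      filter_upwards [(Metric.isClosed_closedBall (x := p) (ε := t)).isOpen_compl.mem_nhds hq] with x hx
      exact z1 x hx
    rw [lap_congr this]
    unfold lap pd
    simp
  have e1 : ∫ q, (η q * lap (fun x => F x * (starRingEnd ℂ) (F x)) q).re
      = ∫ q in T, (η q * lap (fun x => F x * (starRingEnd ℂ) (F x)) q).re := by
    rw [setIntegral_eq_integral_of_forall_compl_eq_zero]
    intro q hq; simp [z1 q hq]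
  have e2 : ∫ q, (lap η q * (F q * (starRingEnd ℂ) (F q))).re
      = ∫ q in T, (lap η q * (F q * (starRingEnd ℂ) (F q))).re := by
    rw [setIntegral_eq_integral_of_forall_compl_eq_zero]
    intro q hq; simp [hlapsupp q hq]
  rw [e1, e2] at kre
  have cη' : Continuous fun q => (η q).re := Complex.continuous_re.comp cη
  have re_eq : ∀ q, (η q * lap (fun x => F x * (starRingEnd ℂ) (F x)) q).re
      = (η q).re * (2 * gradSq F q) + (η q).re * (2 * (lap F q * (starRingEnd ℂ) (F q)).re) := by
    intro q
    obtain ⟨c, _, _, hc⟩ := hηr q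
    rw [hc, Complex.re_ofReal_mul, lap_normSq hF, Complex.ofReal_re]; ring
  simp_rw [re_eq] at kre
  have cx : Continuous fun q => (lap F q * (starRingEnd ℂ) (F q)).re :=
    Complex.continuous_re.comp (cl.mul (Complex.continuous_conj.comp cF))
  have J1 : IntegrableOn (fun q => (η q).re * (2 * gradSq F q)) T :=
    (by fun_prop : Continuous _).continuousOn.integrableOn_compact hTc
  have J2 : IntegrableOn (fun q => (η q).re * (2 * (lap F q * (starRingEnd ℂ) (F q)).re)) T :=
    (by fun_prop : Continuous _).continuousOn.integrableOn_compact hTc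
  have J3 : IntegrableOn (fun q => (lap η q * (F q * (starRingEnd ℂ) (F q))).re) T := I2.re.integrableOn
  have J4 : IntegrableOn (fun q => ‖F q‖ ^ 2 + ‖lap F q‖ ^ 2) T :=
    (by fun_prop : Continuous _).continuousOn.integrableOn_compact hTc
  rw [integral_add J1 J2] at kre
  have b1 : ∫ q in Metric.closedBall p s, 2 * gradSq F q ≤ ∫ q in T, (η q).re * (2 * gradSq F q) := by
    have : ∫ q in Metric.closedBall p s, 2 * gradSq F q
        = ∫ q in Metric.closedBall p s, (η q).re * (2 * gradSq F q) := by
      apply setIntegral_congr_fun Metric.isClosed_closedBall.measurableSet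
      intro q hq
      simp [hη1 q hq]
    rw [this]
    apply setIntegral_mono_set J1
    · filter_upwards with q
      obtain ⟨c, h0, _, hc⟩ := hηr q
      have := gradSq_nonneg F q
      simp only [hc, Complex.ofReal_re, Pi.zero_apply]
      positivity
    · exact (Metric.closedBall_subset_closedBall hst.le).eventuallyLE
  have b2 : ∫ q in T, (lap η q * (F q * (starRingEnd ℂ) (F q))).re
      - (η q).re * (2 * (lap F q * (starRingEnd ℂ) (F q)).re)
      ≤ ∫ q in T, (M + 1) * (‖F q‖ ^ 2 + ‖lap F q‖ ^ 2) := by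
    apply setIntegral_mono (J3.sub J2) (J4.const_mul _)
    intro q
    obtain ⟨c, h0, h1, hc⟩ := hηr q
    have a1 : (lap η q * (F q * (starRingEnd ℂ) (F q))).re ≤ M * ‖F q‖ ^ 2 := by
      refine (Complex.re_le_norm _).trans ?_
      rw [norm_mul, norm_mul, RCLike.norm_conj, ← sq]
      gcongr
      exact hM q
    have a2 : -((lap F q * (starRingEnd ℂ) (F q)).re) ≤ ‖lap F q‖ * ‖F q‖ := by
      have := Complex.abs_re_le_norm (lap F q * (starRingEnd ℂ) (F q))
      rw [norm_mul, RCLike.norm_conj] at this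
      exact (neg_le_abs _).trans this
    simp only [Pi.sub_apply, hc, Complex.ofReal_re]
    have a3 : -(c * (2 * (lap F q * (starRingEnd ℂ) (F q)).re)) ≤ ‖F q‖ ^ 2 + ‖lap F q‖ ^ 2 := by
      have : c * -((lap F q * (starRingEnd ℂ) (F q)).re) ≤ 1 * (‖lap F q‖ * ‖F q‖) := by
        by_cases hx : 0 ≤ -((lap F q * (starRingEnd ℂ) (F q)).re)
        · gcongr
        · push Not at hx
          exact (mul_nonpos_of_nonneg_of_nonpos h0 hx.le).trans (by positivity)
      nlinarith [sq_nonneg (‖F q‖ - ‖lap F q‖)]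
    nlinarith [mul_nonneg hM0 (sq_nonneg ‖lap F q‖)]
  rw [integral_sub J3 J2, integral_const_mul] at b2
  have b3 : ∫ q in Metric.closedBall p s, 2 * gradSq F q = 2 * ∫ q in Metric.closedBall p s, gradSq F q :=
    integral_const_mul _ _
  have b4 : 0 ≤ ∫ q in Metric.closedBall p s, gradSq F q :=
    integral_nonneg (fun q => gradSq_nonneg F q)
  linarith

lemma lap_cut_pointwise {a b c d : ℂ} {x0 x1 y0 y1 : ℂ} {M : ℝ} (hM : 0 ≤ M) (ha : ‖a‖ ≤ M) (hc : ‖c‖ ≤ 1)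
    (h0 : ‖x0‖ ≤ M) (h1 : ‖x1‖ ≤ M) :
    ‖a * b + c * d + 2 * (x0 * y0 + x1 * y1)‖ ^ 2
      ≤ (16 * M ^ 2 + 4) * ((‖b‖ ^ 2 + ‖d‖ ^ 2) + (‖y0‖ ^ 2 + ‖y1‖ ^ 2)) := by
  have hn : ‖a * b + c * d + 2 * (x0 * y0 + x1 * y1)‖ ≤ M * ‖b‖ + 1 * ‖d‖ + 2 * (M * ‖y0‖ + M * ‖y1‖) := by
    refine (norm_add_le _ _).trans ?_
    refine add_le_add ((norm_add_le _ _).trans ?_) ?_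
    · rw [norm_mul, norm_mul]; gcongr
    · rw [norm_mul]
      simp only [Complex.norm_ofNat]
      gcongr
      refine (norm_add_le _ _).trans ?_
      rw [norm_mul, norm_mul]; gcongr
  calc _ ≤ (M * ‖b‖ + 1 * ‖d‖ + 2 * (M * ‖y0‖ + M * ‖y1‖)) ^ 2 := by gcongr
    _ ≤ 4 * ((M * ‖b‖) ^ 2 + ‖d‖ ^ 2 + (2 * (M * ‖y0‖)) ^ 2 + (2 * (M * ‖y1‖)) ^ 2) := by
        set X := M * ‖b‖; set Y := ‖d‖; set Z := 2 * (M * ‖y0‖); set W := 2 * (M * ‖y1‖)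
        have e : M * ‖b‖ + 1 * ‖d‖ + 2 * (M * ‖y0‖ + M * ‖y1‖) = X + Y + Z + W := by
          simp only [X, Y, Z, W]; ring
        have e2 : X + 1 * Y + 2 * (M * ‖y0‖ + M * ‖y1‖) = X + Y + Z + W := e
        rw [e2]
        nlinarith [sq_nonneg (X - Y), sq_nonneg (X - Z), sq_nonneg (X - W), sq_nonneg (Y - Z),
          sq_nonneg (Y - W), sq_nonneg (Z - W)]
    _ ≤ _ := by
        have A := sq_nonneg (M * ‖b‖); have B := sq_nonneg ‖d‖
        have B2 := sq_nonneg (M * ‖d‖)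
        have B3 := sq_nonneg (‖b‖)
        have B4 := sq_nonneg (‖y0‖)
        have B5 := sq_nonneg (‖y1‖)
        nlinarith

/-- Small-ball gradient estimate for global `C²` functions. -/
lemma small_ball_global (p : E2) {ρ : ℝ} (hρ : 0 < ρ) :
    ∃ C : ENNReal, C ≠ ⊤ ∧ ∀ F : E2 → ℂ, ContDiff ℝ 2 F → ∀ r : ℝ, 0 < r → r ≤ ρ →
      ∫⁻ q in Metric.ball p r, ENNReal.ofReal (gradSq F q)
        ≤ C * ENNReal.ofReal r *
          ENNReal.ofReal (∫ q in Metric.closedBall p (3 * ρ), (‖F q‖ ^ 2 + ‖lap F q‖ ^ 2)) := by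
  obtain ⟨χ, hχ, hχc, hχs, hχ1, hχr⟩ := exists_cutoff p hρ (by linarith : ρ < 2 * ρ)
  obtain ⟨C1, hC1, hgrad⟩ := interior_grad p (by linarith : 0 < 2 * ρ) (by linarith : 2 * ρ < 3 * ρ)
  obtain ⟨C2, hC2, hsob⟩ := sobolev_small_ball p (2 * ρ)
  have hχ1' : ContDiff ℝ 1 χ := hχ.of_le (by norm_num)
  obtain ⟨M0, hM0, hM0'⟩ := exists_bound (lap_continuous hχ) (lap_compact hχc)
  obtain ⟨M1, hM1, hM1'⟩ := exists_bound (pd_continuous 0 hχ1') (pd_compact 0 hχc)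
  obtain ⟨M2, hM2, hM2'⟩ := exists_bound (pd_continuous 1 hχ1') (pd_compact 1 hχc)
  set M := M0 + M1 + M2 with hM
  have hMn : 0 ≤ M := by positivity
  set D := (16 * M ^ 2 + 4) with hD
  have hDn : 0 ≤ D := by positivity
  refine ⟨C2 * ENNReal.ofReal (D * (1 + C1)), ENNReal.mul_ne_top hC2 ENNReal.ofReal_ne_top, ?_⟩
  intro F hF r hr hrρ
  set h : E2 → ℂ := fun x => χ x * F x with hh
  have hF1 : ContDiff ℝ 1 F := hF.of_le (by norm_num)
  have hhC : ContDiff ℝ 2 h := hχ.mul hF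
  have hhc : HasCompactSupport h := hχc.mul_right
  have hhs : tsupport h ⊆ Metric.closedBall p (2 * ρ) := (tsupport_mul_subset_left).trans hχs
  have c1 : ∀ i, ContDiff ℝ 1 (pd i h) := fun i => pd_contDiff (n := 1) i hhC
  have psupp : ∀ i, Function.support (pd i h) ⊆ Metric.closedBall p (2 * ρ) := by
    intro i q hq
    apply hhs
    apply support_fderiv_subset ℝ
    intro h0
    apply hq
    simp [pd, h0]
  set B2 := Metric.closedBall p (2 * ρ) with hB2
  set B3 := Metric.closedBall p (3 * ρ) with hB3
  have cF := hF.continuous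
  have cl := lap_continuous hF
  have cg := gradSq_continuous hF1
  have clh := lap_continuous hhC
  -- bound on ∫ |Δh|²
  have I3 : IntegrableOn (fun q => ‖F q‖ ^ 2 + ‖lap F q‖ ^ 2) B3 :=
    (by fun_prop : Continuous _).continuousOn.integrableOn_compact (isCompact_closedBall _ _)
  have I2 : IntegrableOn (fun q => ‖F q‖ ^ 2 + ‖lap F q‖ ^ 2) B2 :=
    (by fun_prop : Continuous _).continuousOn.integrableOn_compact (isCompact_closedBall _ _)
  have I2g : IntegrableOn (gradSq F) B2 :=
    cg.continuousOn.integrableOn_compact (isCompact_closedBall _ _)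
  have hlap : ∫ q, ‖lap h q‖ ^ 2 ≤ D * (1 + C1) * ∫ q in B3, (‖F q‖ ^ 2 + ‖lap F q‖ ^ 2) := by
    have e1 : ∫ q, ‖lap h q‖ ^ 2 = ∫ q in B2, ‖lap h q‖ ^ 2 := by
      rw [setIntegral_eq_integral_of_forall_compl_eq_zero]
      intro q hq
      have : h =ᶠ[nhds q] fun _ => 0 := by
        filter_upwards [(Metric.isClosed_closedBall (x := p) (ε := 2 * ρ)).isOpen_compl.mem_nhds hq]
          with x hx
        exact image_eq_zero_of_notMem_tsupport (fun h => hx (hhs h))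
      rw [lap_congr this]
      unfold lap pd
      simp
    rw [e1]
    have e2 : ∫ q in B2, ‖lap h q‖ ^ 2
        ≤ ∫ q in B2, D * ((‖F q‖ ^ 2 + ‖lap F q‖ ^ 2) + gradSq F q) := by
      apply setIntegral_mono
      · exact (by fun_prop : Continuous _).continuousOn.integrableOn_compact (isCompact_closedBall _ _)
      · exact (I2.add I2g).const_mul D
      intro q
      obtain ⟨c, hc0, hc1, hc⟩ := hχr q
      have hcn : ‖χ q‖ ≤ 1 := by
        rw [hc, Complex.norm_real, Real.norm_eq_abs, abs_of_nonneg hc0]; exact hc1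
      simp only [hh]
      rw [lap_mul hχ hF q]
      exact lap_cut_pointwise hMn ((hM0' q).trans (by linarith)) hcn
        ((hM1' q).trans (by linarith)) ((hM2' q).trans (by linarith))
    refine e2.trans ?_
    rw [integral_const_mul, integral_add I2 I2g, mul_assoc]
    gcongr
    have e3 : ∫ q in B2, (‖F q‖ ^ 2 + ‖lap F q‖ ^ 2) ≤ ∫ q in B3, (‖F q‖ ^ 2 + ‖lap F q‖ ^ 2) := by
      apply setIntegral_mono_set I3
      · filter_upwards with q
        simp only [Pi.zero_apply]; positivity
      · exact (Metric.closedBall_subset_closedBall (by linarith)).eventuallyLE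
    have e4 := hgrad F hF
    linarith
  -- compare
  have eqn : ∀ q ∈ Metric.ball p r, gradSq F q = gradSq h q := by
    intro q hq
    apply gradSq_congr
    filter_upwards [Metric.isOpen_ball.mem_nhds hq] with x hx
    simp only [hh]
    rw [hχ1 x (Metric.closedBall_subset_closedBall hrρ (Metric.ball_subset_closedBall hx)), one_mul]
  have gs : ∀ g : E2 → ℂ, ∀ q, ENNReal.ofReal (gradSq g q) = ‖pd 0 g q‖ₑ ^ 2 + ‖pd 1 g q‖ₑ ^ 2 := by
    intro g q
    rw [gradSq, ENNReal.ofReal_add (by positivity) (by positivity), enorm_sq_ofReal, enorm_sq_ofReal]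
  have m : ∀ i, Measurable fun q => ‖pd i h q‖ₑ ^ 2 := fun i => (pd_measurable h i).enorm.pow_const 2
  have J : ∀ i j, Integrable (fun q => ‖pd j (pd i h) q‖ ^ 2) := fun i j =>
    sq_integrable (pd_continuous j (c1 i)) (pd_compact j (pd_compact i hhc))
  calc ∫⁻ q in Metric.ball p r, ENNReal.ofReal (gradSq F q)
      = ∫⁻ q in Metric.ball p r, (‖pd 0 h q‖ₑ ^ 2 + ‖pd 1 h q‖ₑ ^ 2) := by
        apply setLIntegral_congr_fun measurableSet_ball
        intro q hq
        simp only
        rw [eqn q hq, gs]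
    _ = (∫⁻ q in Metric.ball p r, ‖pd 0 h q‖ₑ ^ 2) + ∫⁻ q in Metric.ball p r, ‖pd 1 h q‖ₑ ^ 2 :=
        lintegral_add_left (m 0) _
    _ ≤ C2 * ENNReal.ofReal r * (∫⁻ q, ‖fderiv ℝ (pd 0 h) q‖ₑ ^ 2)
        + C2 * ENNReal.ofReal r * (∫⁻ q, ‖fderiv ℝ (pd 1 h) q‖ₑ ^ 2) :=
        add_le_add (hsob _ (c1 0) (psupp 0) r hr) (hsob _ (c1 1) (psupp 1) r hr)
    _ ≤ C2 * ENNReal.ofReal r * (∫⁻ q, ENNReal.ofReal (gradSq (pd 0 h) q))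
        + C2 * ENNReal.ofReal r * (∫⁻ q, ENNReal.ofReal (gradSq (pd 1 h) q)) := by
        gcongr with q q
        · rw [enorm_sq_ofReal]; exact ENNReal.ofReal_le_ofReal (norm_fderiv_sq_le _ _)
        · rw [enorm_sq_ofReal]; exact ENNReal.ofReal_le_ofReal (norm_fderiv_sq_le _ _)
    _ = C2 * ENNReal.ofReal r * ∫⁻ q, ENNReal.ofReal (gradSq (pd 0 h) q + gradSq (pd 1 h) q) := by
        rw [← mul_add, ← lintegral_add_left (gradSq_measurable _).ennreal_ofReal]
        simp_rw [ENNReal.ofReal_add (gradSq_nonneg _ _) (gradSq_nonneg _ _)]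
    _ = C2 * ENNReal.ofReal r * ENNReal.ofReal (∫ q, ‖lap h q‖ ^ 2) := by
        rw [← hess_identity hhC hhc, ofReal_integral_eq_lintegral_ofReal]
        · exact ((J 0 0).add (J 0 1)).add ((J 1 0).add (J 1 1))
        · filter_upwards with q
          exact add_nonneg (gradSq_nonneg _ _) (gradSq_nonneg _ _)
    _ ≤ C2 * ENNReal.ofReal r *
          ENNReal.ofReal (D * (1 + C1) * ∫ q in B3, (‖F q‖ ^ 2 + ‖lap F q‖ ^ 2)) := by
        gcongr
    _ = _ := by
        rw [ENNReal.ofReal_mul (by positivity)]; ring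

lemma energy_bound {Ω : Set E2} (hΩo : IsOpen Ω) {f : E2 → ℂ} (hf : ContDiffOn ℝ 2 f Ω)
    (h1 : IntegrableOn (fun q => ‖f q‖ ^ 2) Ω) (h2 : IntegrableOn (fun q => ‖lap f q‖ ^ 2) Ω)
    (h3 : (∫ q in Ω, lap f q * (starRingEnd ℂ) (f q)).re ≤ 0) :
    ∫ q in Ω, (‖f q‖ ^ 2 + ‖lap f q‖ ^ 2) ≤ ∫ q in Ω, ‖-lap f q + f q‖ ^ 2 := by
  have mf : AEStronglyMeasurable f (volume.restrict Ω) :=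
    hf.continuousOn.aestronglyMeasurable hΩo.measurableSet
  have ml : AEStronglyMeasurable (lap f) (volume.restrict Ω) :=
    (lap_measurable f).aestronglyMeasurable
  have Ix : IntegrableOn (fun q => lap f q * (starRingEnd ℂ) (f q)) Ω := by
    refine Integrable.mono' (h1.add h2) ?_ ?_
    · exact ml.mul (Complex.continuous_conj.comp_aestronglyMeasurable mf)
    · filter_upwards with q
      rw [norm_mul, RCLike.norm_conj]
      simp only [Pi.add_apply]
      nlinarith [sq_nonneg (‖f q‖ - ‖lap f q‖), sq_nonneg ‖f q‖, sq_nonneg ‖lap f q‖]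
  have r1 := integral_re Ix
  simp only [RCLike.re_eq_complex_re] at r1
  rw [← r1] at h3
  have Ir : IntegrableOn (fun q => (lap f q * (starRingEnd ℂ) (f q)).re) Ω := Ix.re
  have e : ∀ q, ‖-lap f q + f q‖ ^ 2 = (‖f q‖ ^ 2 + ‖lap f q‖ ^ 2)
      - 2 * (lap f q * (starRingEnd ℂ) (f q)).re := by
    intro q
    rw [← Complex.normSq_eq_norm_sq, Complex.normSq_add, Complex.normSq_eq_norm_sq,
      Complex.normSq_eq_norm_sq, norm_neg, neg_mul, Complex.neg_re]
    ring
  simp_rw [e]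
  have I12 : IntegrableOn (fun q => ‖f q‖ ^ 2 + ‖lap f q‖ ^ 2) Ω := h1.add h2
  rw [integral_sub I12 (Ir.const_mul 2), integral_const_mul]
  linarith

/-- The estimate on `f`. -/
lemma f_estimate {Ω : Set E2} (hΩo : IsOpen Ω) (p : E2) {ρ : ℝ} (hρ : 0 < ρ)
    (hsub : Metric.closedBall p (5 * ρ) ⊆ Ω) :
    ∃ C : ENNReal, C ≠ ⊤ ∧ ∀ f : E2 → ℂ, ContDiffOn ℝ 2 f Ω →
      IntegrableOn (fun q => ‖f q‖ ^ 2) Ω → IntegrableOn (fun q => ‖lap f q‖ ^ 2) Ω →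
      (∫ q in Ω, lap f q * (starRingEnd ℂ) (f q)).re ≤ 0 → ∀ r : ℝ, 0 < r → r ≤ ρ →
      ∫⁻ q in Metric.ball p r, ENNReal.ofReal (gradSq f q)
        ≤ C * ENNReal.ofReal r * ENNReal.ofReal (∫ q in Ω, ‖-lap f q + f q‖ ^ 2) := by
  obtain ⟨C, hC, hmain⟩ := small_ball_global p hρ
  obtain ⟨θ, hθ, hθc, hθs, hθ1, hθr⟩ := exists_cutoff p (by linarith : 0 < 4 * ρ)
    (by linarith : 4 * ρ < 5 * ρ)
  refine ⟨C, hC, ?_⟩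
  intro f hf h1 h2 h3 r hr hrρ
  set F : E2 → ℂ := fun x => θ x * f x with hFdef
  have hF : ContDiff ℝ 2 F := by
    rw [contDiff_iff_contDiffAt]
    intro q
    by_cases hq : q ∈ Ω
    · exact hθ.contDiffAt.mul (hf.contDiffAt (hΩo.mem_nhds hq))
    · have : F =ᶠ[nhds q] fun _ => 0 := by
        have hq' : q ∈ (tsupport θ)ᶜ := fun h => hq (hsub (hθs h))
        filter_upwards [(isClosed_tsupport θ).isOpen_compl.mem_nhds hq'] with x hx
        simp [hFdef, image_eq_zero_of_notMem_tsupport hx]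
      exact contDiffAt_const.congr_of_eventuallyEq this
  have hFf : ∀ q ∈ Metric.ball p (4 * ρ), F =ᶠ[nhds q] f := by
    intro q hq
    filter_upwards [Metric.isOpen_ball.mem_nhds hq] with x hx
    simp [hFdef, hθ1 x (Metric.ball_subset_closedBall hx)]
  have b34 : Metric.closedBall p (3 * ρ) ⊆ Metric.ball p (4 * ρ) :=
    Metric.closedBall_subset_ball (by linarith)
  have b3Ω : Metric.closedBall p (3 * ρ) ⊆ Ω :=
    (Metric.closedBall_subset_closedBall (by linarith)).trans hsub
  have e1 : ∫⁻ q in Metric.ball p r, ENNReal.ofReal (gradSq f q)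
      = ∫⁻ q in Metric.ball p r, ENNReal.ofReal (gradSq F q) := by
    apply setLIntegral_congr_fun measurableSet_ball
    intro q hq
    simp only
    rw [gradSq_congr (hFf q (Metric.ball_subset_ball (by linarith) hq))]
  have e2 : ∫ q in Metric.closedBall p (3 * ρ), (‖F q‖ ^ 2 + ‖lap F q‖ ^ 2)
      = ∫ q in Metric.closedBall p (3 * ρ), (‖f q‖ ^ 2 + ‖lap f q‖ ^ 2) := by
    apply setIntegral_congr_fun measurableSet_closedBall
    intro q hq
    simp only
    rw [lap_congr (hFf q (b34 hq)), (hFf q (b34 hq)).eq_of_nhds]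
  have e3 : ∫ q in Metric.closedBall p (3 * ρ), (‖f q‖ ^ 2 + ‖lap f q‖ ^ 2)
      ≤ ∫ q in Ω, (‖f q‖ ^ 2 + ‖lap f q‖ ^ 2) := by
    apply setIntegral_mono_set (h1.add h2)
    · filter_upwards with q
      simp only [Pi.zero_apply, Pi.add_apply]; positivity
    · exact b3Ω.eventuallyLE
  rw [e1]
  refine (hmain F hF r hr hrρ).trans ?_
  rw [e2]
  gcongr
  exact e3.trans (energy_bound hΩo hf h1 h2 h3)

/-- The unit vector with angle φ. -/
def cs (φ : ℝ) : E2 := pt (Real.cos φ) (Real.sin φ)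

lemma norm_cs (φ : ℝ) : ‖cs φ‖ = 1 := by
  simp [cs, pt, EuclideanSpace.norm_eq]

lemma pt_polar (p₁ p₂ r φ : ℝ) :
    pt (p₁ + r * Real.cos φ) (p₂ + r * Real.sin φ) = pt p₁ p₂ + r • cs φ := by
  ext i
  fin_cases i <;> simp [cs, pt]

lemma continuous_cs : Continuous cs := by
  unfold cs pt
  apply (PiLp.continuous_toLp 2 _).comp
  apply continuous_pi
  intro i
  fin_cases i <;> simp <;> fun_prop

lemma polar_lint (p : E2) (F : E2 → ENNReal) (hF : Measurable F) :
    ∫⁻ q, F q = ∫⁻ r in Ioi (0:ℝ), ∫⁻ φ in Ioo (-π) π, ENNReal.ofReal r * F (p + r • cs φ) := by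
  have h1 : ∫⁻ q, F q = ∫⁻ q, F (p + q) := (lintegral_add_left_eq_self F p).symm
  have h2 : ∫⁻ q, F (p + q) = ∫⁻ z : ℝ × ℝ, F (p + pt z.1 z.2) := by
    have e1 := (EuclideanSpace.volume_preserving_symm_measurableEquiv_toLp (Fin 2)).symm.lintegral_comp
      (f := fun q => F (p + q)) (by fun_prop)
    rw [← e1]
    have e2 := (volume_preserving_finTwoArrow ℝ).symm.lintegral_comp
      (f := fun a => F (p + (MeasurableEquiv.toLp 2 (Fin 2 → ℝ)).symm.symm a)) (by fun_prop)
    rw [← e2]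
    congr 1
  rw [h1, h2, ← lintegral_comp_polarCoord_symm]
  have hm : Measurable fun z : ℝ × ℝ => ENNReal.ofReal z.1 * F (p + z.1 • cs z.2) := by
    apply Measurable.mul (by fun_prop)
    apply hF.comp
    apply Continuous.measurable
    have := continuous_cs
    fun_prop
  have h3 : polarCoord.target = Ioi (0:ℝ) ×ˢ Ioo (-π) π := rfl
  rw [h3, Measure.volume_eq_prod, ← Measure.prod_restrict, ← lintegral_prod _ hm.aemeasurable]
  congr 1
  ext z
  simp only [polarCoord_symm_apply, smul_eq_mul]
  congr 3
  ext i
  fin_cases i <;> simp [cs, pt]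

lemma select (p : E2) (H : E2 → ENNReal) (hH : Measurable H) {M : ENNReal} (hM : ∫⁻ q, H q ≤ M)
    {a b : ℝ} (ha : 0 < a) (hab : a < b) :
    ∃ r ∈ Ioo a b, ∫⁻ φ in Ioo (-π) π, ENNReal.ofReal r * H (p + r • cs φ)
      ≤ M / ENNReal.ofReal (b - a) := by
  have hm : Measurable fun z : ℝ × ℝ => ENNReal.ofReal z.1 * H (p + z.1 • cs z.2) := by
    apply Measurable.mul (by fun_prop)
    apply hH.comp
    apply Continuous.measurable
    have := continuous_cs
    fun_prop
  have hm2 : Measurable fun r : ℝ => ∫⁻ φ in Ioo (-π) π, ENNReal.ofReal r * H (p + r • cs φ) :=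
    hm.lintegral_prod_right'
  obtain ⟨r, hr, h⟩ := exists_le_setLAverage (μ := volume) (s := Ioo a b) (by simp [hab]) (by simp)
    hm2.aemeasurable
  refine ⟨r, hr, h.trans ?_⟩
  rw [setLAverage_eq, Real.volume_Ioo]
  gcongr
  calc _ ≤ ∫⁻ r in Ioi (0:ℝ), ∫⁻ φ in Ioo (-π) π, ENNReal.ofReal r * H (p + r • cs φ) :=
        lintegral_mono_set fun x hx => ha.trans hx.1
    _ = _ := (polar_lint p H hH).symm
    _ ≤ M := hM

lemma lint_cs {α : Type*} [MeasurableSpace α] (μ : Measure α) {f g : α → ENNReal}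
    (hf : AEMeasurable f μ) (hg : AEMeasurable g μ) :
    (∫⁻ x, f x * g x ∂μ) ^ 2 ≤ (∫⁻ x, f x ^ 2 ∂μ) * ∫⁻ x, g x ^ 2 ∂μ := by
  have h := ENNReal.lintegral_mul_le_Lp_mul_Lq μ Real.HolderConjugate.two_two hf hg
  simp only [Pi.mul_apply, ENNReal.rpow_two] at h
  have h2 := pow_le_pow_left' h 2
  refine h2.trans_eq ?_
  rw [mul_pow, ← ENNReal.rpow_two, ← ENNReal.rpow_two, ← ENNReal.rpow_mul, ← ENNReal.rpow_mul]
  norm_num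

lemma ennreal_add_sq (x y : ENNReal) : (x + y) ^ 2 ≤ 2 * x ^ 2 + 2 * y ^ 2 := by
  have := ENNReal.rpow_add_le_mul_rpow_add_rpow x y (p := 2) (by norm_num)
  norm_num at this
  rwa [mul_add] at this

lemma radial_1d {g g' : ℝ → ℂ} {a b : ℝ} (ha : 0 < a) (hab : a < b)
    (hd : ∀ r ∈ Icc a b, HasDerivAt g (g' r) r) (hc : ContinuousOn g' (Icc a b)) :
    ‖g a‖ₑ ^ 2 ≤ 2 * ‖g b‖ₑ ^ 2 + 2 * (ENNReal.ofReal (Real.log (b / a)) *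
      ∫⁻ r in Ioc a b, ENNReal.ofReal r * ‖g' r‖ₑ ^ 2) := by
  have h1 : g b - g a = ∫ r in Ioc a b, g' r := by
    rw [← intervalIntegral.integral_of_le hab.le]
    symm
    apply intervalIntegral.integral_eq_sub_of_hasDerivAt
    · rwa [uIcc_of_le hab.le]
    · apply ContinuousOn.intervalIntegrable
      rwa [uIcc_of_le hab.le]
  have h2 : ‖g a‖ₑ ≤ ‖g b‖ₑ + ∫⁻ r in Ioc a b, ‖g' r‖ₑ := by
    have : g a = g b - ∫ r in Ioc a b, g' r := by rw [← h1]; ring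
    rw [this]
    exact enorm_sub_le.trans (add_le_add le_rfl (enorm_integral_le_lintegral_enorm _))
  have hm : AEMeasurable g' (volume.restrict (Ioc a b)) :=
    (hc.mono Ioc_subset_Icc_self).aemeasurable measurableSet_Ioc
  have h3 : (∫⁻ r in Ioc a b, ‖g' r‖ₑ) ^ 2 ≤ ENNReal.ofReal (Real.log (b / a)) *
      ∫⁻ r in Ioc a b, ENNReal.ofReal r * ‖g' r‖ₑ ^ 2 := by
    have e := lint_cs (volume.restrict (Ioc a b)) (f := fun r => ENNReal.ofReal (√(r⁻¹)))
      (g := fun r => ENNReal.ofReal (√r) * ‖g' r‖ₑ) (by fun_prop) (by fun_prop)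
    have e1 : ∫⁻ r in Ioc a b, ENNReal.ofReal (√(r⁻¹)) * (ENNReal.ofReal (√r) * ‖g' r‖ₑ)
        = ∫⁻ r in Ioc a b, ‖g' r‖ₑ := by
      apply setLIntegral_congr_fun measurableSet_Ioc
      intro r hr
      have : 0 < r := ha.trans hr.1
      simp only
      rw [← mul_assoc, ← ENNReal.ofReal_mul (by positivity), Real.sqrt_inv,
        inv_mul_cancel₀ (by positivity)]
      simp
    have e2 : ∫⁻ r in Ioc a b, (ENNReal.ofReal (√r) * ‖g' r‖ₑ) ^ 2
        = ∫⁻ r in Ioc a b, ENNReal.ofReal r * ‖g' r‖ₑ ^ 2 := by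
      apply setLIntegral_congr_fun measurableSet_Ioc
      intro r hr
      have : 0 < r := ha.trans hr.1
      simp only
      rw [mul_pow, ← ENNReal.ofReal_pow (by positivity), Real.sq_sqrt this.le]
    have e3 : ∫⁻ r in Ioc a b, (ENNReal.ofReal (√(r⁻¹))) ^ 2 = ENNReal.ofReal (Real.log (b / a)) := by
      have : ∫⁻ r in Ioc a b, (ENNReal.ofReal (√(r⁻¹))) ^ 2
          = ∫⁻ r in Ioc a b, ENNReal.ofReal (r⁻¹) := by
        apply setLIntegral_congr_fun measurableSet_Ioc
        intro r hr
        have : 0 < r := ha.trans hr.1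
        simp only
        rw [← ENNReal.ofReal_pow (by positivity), Real.sq_sqrt (by positivity)]
      rw [this, ← ofReal_integral_eq_lintegral_ofReal, ← intervalIntegral.integral_of_le hab.le,
        integral_inv_of_pos ha (ha.trans hab)]
      · refine (intervalIntegrable_iff_integrableOn_Ioc_of_le hab.le).1 ?_
        apply ContinuousOn.intervalIntegrable
        rw [uIcc_of_le hab.le]
        exact continuousOn_inv₀.mono fun x hx => (ha.trans_le hx.1).ne'
      · refine (ae_restrict_iff' measurableSet_Ioc).2 (Filter.Eventually.of_forall fun r hr => ?_)
        exact inv_nonneg.2 (ha.trans hr.1).le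
    rw [e1, e2, e3] at e
    exact e
  calc ‖g a‖ₑ ^ 2 ≤ (‖g b‖ₑ + ∫⁻ r in Ioc a b, ‖g' r‖ₑ) ^ 2 := pow_le_pow_left' h2 2
    _ ≤ _ := ennreal_add_sq _ _
    _ ≤ _ := by gcongr

lemma radial_trace {u : E2 → ℂ} {V : Set E2} (hV : IsOpen V) (hu : ContDiffOn ℝ 1 u V) (p : E2)
    {H : E2 → ENNReal} (hH : ∀ q ∈ V, ENNReal.ofReal (gradSq u q) ≤ H q)
    (hH2 : ∀ q ∈ V, ‖u q‖ₑ ^ 2 ≤ H q)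
    {a b : ℝ} (ha : 0 < a) (hab : a < b) (φ : ℝ) (hsub : ∀ r ∈ Icc a b, p + r • cs φ ∈ V) :
    ‖u (p + a • cs φ)‖ₑ ^ 2 ≤ 2 * H (p + b • cs φ) + 2 * (ENNReal.ofReal (Real.log (b / a)) *
      ∫⁻ r in Ioi (0:ℝ), ENNReal.ofReal r * H (p + r • cs φ)) := by
  have h := radial_1d (g := fun r => u (p + r • cs φ)) (g' := fun r => fderiv ℝ u (p + r • cs φ) (cs φ))
    ha hab (fun r hr => by
      have hd := ((hu.differentiableOn one_ne_zero).differentiableAt (hV.mem_nhds (hsub r hr))).hasFDerivAt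
      have h2 : HasDerivAt (fun r : ℝ => p + r • cs φ) (cs φ) r := by
        simpa using ((hasDerivAt_id r).smul_const (cs φ)).const_add p
      exact hd.comp_hasDerivAt r h2) (by
      have hc := hu.continuousOn_fderiv_of_isOpen hV le_rfl
      have : ContinuousOn (fun r : ℝ => p + r • cs φ) (Icc a b) := by fun_prop
      exact (hc.comp this hsub).clm_apply continuousOn_const)
  refine h.trans (add_le_add ?_ ?_)
  · gcongr
    exact hH2 _ (hsub b ⟨hab.le, le_rfl⟩)
  · gcongr 2 * (_ * ?_)
    refine le_trans ?_ (lintegral_mono_set (fun x hx => ha.trans hx.1 : Ioc a b ⊆ Ioi 0))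
    apply setLIntegral_mono' measurableSet_Ioc
    intro r hr
    gcongr
    refine le_trans ?_ (hH _ (hsub r ⟨hr.1.le, hr.2⟩))
    rw [enorm_sq_ofReal]
    apply ENNReal.ofReal_le_ofReal
    have := norm_apply_sq_le u (p + r • cs φ) (cs φ)
    simpa [norm_cs] using this

lemma trace_int {u : E2 → ℂ} {V : Set E2} (hV : IsOpen V) (hu : ContDiffOn ℝ 1 u V) (p : E2)
    {H : E2 → ENNReal} (mH : Measurable H) (hH : ∀ q ∈ V, ENNReal.ofReal (gradSq u q) ≤ H q)
    (hH2 : ∀ q ∈ V, ‖u q‖ₑ ^ 2 ≤ H q)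
    {a b : ℝ} (ha : 0 < a) (hab : a < b) (hsub : ∀ φ, ∀ r ∈ Icc a b, p + r • cs φ ∈ V) :
    ∫⁻ φ in Ioo (-π) π, ‖u (p + a • cs φ)‖ₑ ^ 2 ≤ 2 * (∫⁻ φ in Ioo (-π) π, H (p + b • cs φ))
      + 2 * (ENNReal.ofReal (Real.log (b / a)) * ∫⁻ q, H q) := by
  have hm : Measurable fun z : ℝ × ℝ => ENNReal.ofReal z.1 * H (p + z.1 • cs z.2) := by
    apply Measurable.mul (by fun_prop)
    apply mH.comp
    apply Continuous.measurable
    have := continuous_cs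
    fun_prop
  have hb : Measurable fun φ => H (p + b • cs φ) := by
    apply mH.comp
    apply Continuous.measurable
    have := continuous_cs
    fun_prop
  calc _ ≤ ∫⁻ φ in Ioo (-π) π, (2 * H (p + b • cs φ) + 2 * (ENNReal.ofReal (Real.log (b / a)) *
      ∫⁻ r in Ioi (0:ℝ), ENNReal.ofReal r * H (p + r • cs φ))) :=
        lintegral_mono fun φ => radial_trace hV hu p hH hH2 ha hab φ (hsub φ)
    _ = _ := by
      have hm2 : Measurable fun φ => ∫⁻ r in Ioi (0:ℝ), ENNReal.ofReal r * H (p + r • cs φ) :=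
        hm.lintegral_prod_left'
      rw [lintegral_add_left (hb.const_mul 2), lintegral_const_mul _ hb,
        lintegral_const_mul _ (hm2.const_mul _),
        lintegral_const_mul _ hm2, polar_lint p H mH, lintegral_lintegral_swap]
      exact (hm.comp measurable_swap).aemeasurable

/-- pointwise bound for the gradient of the radially linear extension -/
lemma grad_v {u v : E2 → ℂ} {p : E2} {ϵ : ℝ} (hϵ : 0 < ϵ)
    (hu : ∀ φ, DifferentiableAt ℝ u (p + ϵ • cs φ))
    (hv : ∀ r φ : ℝ, 0 ≤ r → r < ϵ → v (p + r • cs φ) = (r / ϵ : ℝ) * u (p + ϵ • cs φ))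
    {r : ℝ} (hr : 0 < r) (hr2 : r < ϵ) (φ : ℝ) :
    gradSq v (p + r • cs φ) ≤ 4 / ϵ ^ 2 * ‖u (p + ϵ • cs φ)‖ ^ 2 + 16 * gradSq u (p + ϵ • cs φ) := by
  set q := p + r • cs φ with hq
  -- every vector is polar
  have hpol : ∀ y : E2, ∃ θ, y = ‖y‖ • cs θ := by
    intro y
    refine ⟨Complex.arg ⟨y 0, y 1⟩, ?_⟩
    have hn : ‖y‖ = ‖(⟨y 0, y 1⟩ : ℂ)‖ := by
      rw [EuclideanSpace.norm_eq, Complex.norm_eq_sqrt_sq_add_sq]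
      simp
    rw [hn]
    ext i
    fin_cases i
    · simp [cs, pt, Complex.norm_mul_cos_arg]
    · simp [cs, pt, Complex.norm_mul_sin_arg]
  set w : E2 → ℂ := fun x => (‖x - p‖ * ϵ⁻¹) • u (p + (ϵ * ‖x - p‖⁻¹) • (x - p)) with hw
  have hvw : v =ᶠ[nhds q] w := by
    have hnb : ∀ᶠ x in nhds q, ‖x - p‖ ∈ Ioo 0 ϵ := by
      apply ContinuousAt.eventually_mem
      · fun_prop
      · apply isOpen_Ioo.mem_nhds
        simp [hq, norm_smul, norm_cs, abs_of_pos hr, hr, hr2]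
    filter_upwards [hnb] with x hx
    obtain ⟨θ, hθ⟩ := hpol (x - p)
    have hx1 : x = p + ‖x - p‖ • cs θ := by rw [← hθ]; abel
    have hx2 : p + (ϵ * ‖x - p‖⁻¹) • (x - p) = p + ϵ • cs θ := by
      conv_lhs => rw [hθ]
      rw [norm_smul, norm_cs, smul_smul]
      congr 2
      have := hx.1.ne'
      simp only [norm_norm]
      field_simp
    rw [hw]
    simp only
    rw [hx2]
    conv_lhs => rw [hx1]
    rw [hv _ θ hx.1.le hx.2, div_eq_mul_inv, Complex.real_smul]
  rw [gradSq_congr hvw]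
  have hqp : q - p = r • cs φ := by simp [hq]
  have hqn : ‖q - p‖ = r := by rw [hqp, norm_smul, norm_cs]; simp [abs_of_pos hr]
  have hne : q - p ≠ 0 := by rw [← norm_pos_iff, hqn]; exact hr
  -- derivative of the norm
  have hnd : DifferentiableAt ℝ (fun x : E2 => ‖x - p‖) q :=
    DifferentiableAt.norm ℝ (by fun_prop) hne
  obtain ⟨N, hN⟩ : ∃ N, HasFDerivAt (fun x : E2 => ‖x - p‖) N q := ⟨_, hnd.hasFDerivAt⟩
  have hN1 : ‖N‖ ≤ 1 := by
    have hl : LipschitzWith 1 (fun x : E2 => ‖x - p‖) := by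
      apply LipschitzWith.of_dist_le_mul
      intro x y
      rw [Real.dist_eq, dist_eq_norm]
      have := abs_norm_sub_norm_le (x - p) (y - p)
      simpa using this
    have := hN.le_of_lipschitz hl
    simpa using this
  have hpq : p + (ϵ * ‖q - p‖⁻¹) • (q - p) = p + ϵ • cs φ := by
    rw [hqn, hqp, smul_smul, mul_assoc, inv_mul_cancel₀ hr.ne', mul_one]
  have hinv : HasFDerivAt (fun x : E2 => ϵ * ‖x - p‖⁻¹) (ϵ • (-(r ^ 2)⁻¹ • N)) q := by
    have h1 := (hasDerivAt_inv (x := ‖q - p‖) (by rw [hqn]; exact hr.ne')).comp_hasFDerivAt q hN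
    rw [hqn] at h1
    exact h1.const_mul ϵ
  have hproj := (hinv.smul ((hasFDerivAt_id q).sub_const p)).const_add p
  have hu' : HasFDerivAt u (fderiv ℝ u (p + ϵ • cs φ)) (p + (ϵ * ‖q - p‖⁻¹) • (q - p)) := by
    rw [hpq]; exact (hu φ).hasFDerivAt
  have hcomp := hu'.comp q hproj
  have hfull := (hN.mul_const ϵ⁻¹).smul hcomp
  have hpd : ∀ i, ‖pd i w q‖ ≤ ‖u (p + ϵ • cs φ)‖ / ϵ + 2 * √(gradSq u (p + ϵ • cs φ)) := by
    intro i
    have e1 : fderiv ℝ w q = _ := hfull.fderiv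
    unfold pd
    rw [e1]
    have hs : ‖(EuclideanSpace.single i 1 : E2)‖ = 1 := by simp
    generalize (EuclideanSpace.single i 1 : E2) = h at hs
    have hNh : |N h| ≤ 1 := by
      have := N.le_opNorm h
      rw [hs, mul_one] at this
      exact this.trans hN1
    have hL := norm_fderiv_le u (p + ϵ • cs φ)
    generalize fderiv ℝ u (p + ϵ • cs φ) = L at hL ⊢
    generalize √(gradSq u (p + ϵ • cs φ)) = G at hL ⊢
    simp only [add_apply, smul_apply,
      ContinuousLinearMap.smulRight_apply, ContinuousLinearMap.comp_apply, Function.comp, id,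
      ContinuousLinearMap.id_apply, hqn]
    change ‖(r * ϵ⁻¹) • L ((ϵ * r⁻¹) • h + (ϵ • -(r ^ 2)⁻¹ • N h) • (q - p)) +
        (ϵ⁻¹ • N h) • u (p + (ϵ * ‖q - p‖⁻¹) • (q - p))‖ ≤ _
    rw [hpq]
    have t1 : ‖(ϵ * r⁻¹) • h + (ϵ • -(r ^ 2)⁻¹ • N h) • (q - p)‖ ≤ 2 * (ϵ / r) := by
      refine (norm_add_le _ _).trans ?_
      rw [norm_smul, norm_smul, hs, hqn]
      simp only [smul_eq_mul, Real.norm_eq_abs, abs_mul, abs_neg, abs_inv, abs_pow, abs_of_pos hr,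
        abs_of_pos hϵ]
      have : ϵ * ((r ^ 2)⁻¹ * |N h|) * r ≤ ϵ * ((r ^ 2)⁻¹ * 1) * r := by gcongr
      have e : ϵ * ((r ^ 2)⁻¹ * 1) * r = ϵ / r := by field_simp
      have e' : ϵ * r⁻¹ * 1 = ϵ / r := by field_simp
      linarith
    have hG0 : 0 ≤ G := (norm_nonneg _).trans hL
    refine (norm_add_le _ _).trans ?_
    rw [norm_smul, norm_smul]
    have t2 := (L.le_opNorm ((ϵ * r⁻¹) • h + (ϵ • -(r ^ 2)⁻¹ • N h) • (q - p))).trans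
      (mul_le_mul hL t1 (norm_nonneg _) hG0)
    have t3 : ‖r * ϵ⁻¹‖ = r * ϵ⁻¹ := by rw [Real.norm_eq_abs, abs_of_pos (by positivity)]
    have t4 : ‖ϵ⁻¹ • N h‖ ≤ ϵ⁻¹ := by
      rw [norm_smul, Real.norm_eq_abs, Real.norm_eq_abs, abs_of_pos (by positivity)]
      exact mul_le_of_le_one_right (by positivity) hNh
    rw [t3]
    have t5 := mul_le_mul_of_nonneg_left t2 (by positivity : 0 ≤ r * ϵ⁻¹)
    have t6 := mul_le_mul_of_nonneg_right t4 (norm_nonneg (u (p + ϵ • cs φ)))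
    have e1 : r * ϵ⁻¹ * (G * (2 * (ϵ / r))) = 2 * G := by field_simp
    rw [e1] at t5
    rw [div_eq_inv_mul]
    linarith
  have ha := hpd 0
  have hb := hpd 1
  have hG := gradSq_nonneg u (p + ϵ • cs φ)
  have hs := Real.sq_sqrt hG
  have hs0 := Real.sqrt_nonneg (gradSq u (p + ϵ • cs φ))
  have hn0 : 0 ≤ ‖u (p + ϵ • cs φ)‖ / ϵ := by positivity
  have e : 4 / ϵ ^ 2 * ‖u (p + ϵ • cs φ)‖ ^ 2 = 4 * (‖u (p + ϵ • cs φ)‖ / ϵ) ^ 2 := by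
    field_simp
  rw [e]
  unfold gradSq
  have k0 := pow_le_pow_left₀ (norm_nonneg _) ha 2
  have k1 := pow_le_pow_left₀ (norm_nonneg _) hb 2
  change _ ≤ _ + 16 * gradSq u (p + ϵ • cs φ)
  nlinarith [sq_nonneg (‖u (p + ϵ • cs φ)‖ / ϵ - 2 * √(gradSq u (p + ϵ • cs φ)))]

lemma ball_v {u v : E2 → ℂ} {p : E2} {ϵ : ℝ} (hϵ : 0 < ϵ)
    (hu : ∀ φ, DifferentiableAt ℝ u (p + ϵ • cs φ))
    (hv : ∀ r φ : ℝ, 0 ≤ r → r < ϵ → v (p + r • cs φ) = (r / ϵ : ℝ) * u (p + ϵ • cs φ))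
    {H : E2 → ENNReal} (mH : Measurable H)
    (hH : ∀ φ, ENNReal.ofReal (gradSq u (p + ϵ • cs φ)) ≤ H (p + ϵ • cs φ)) :
    ∫⁻ q in Metric.ball p ϵ, ENNReal.ofReal (gradSq v q)
      ≤ 4 * (∫⁻ φ in Ioo (-π) π, ‖u (p + ϵ • cs φ)‖ₑ ^ 2)
        + ENNReal.ofReal (16 * ϵ ^ 2) * ∫⁻ φ in Ioo (-π) π, H (p + ϵ • cs φ) := by
  have hm : Measurable fun q => ENNReal.ofReal (gradSq v q) := (gradSq_measurable v).ennreal_ofReal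
  have hb : Measurable fun φ => H (p + ϵ • cs φ) := by
    apply mH.comp
    apply Continuous.measurable
    have := continuous_cs
    fun_prop
  have hub : Measurable fun φ => ‖u (p + ϵ • cs φ)‖ₑ ^ 2 := by
    have : Continuous fun φ => u (p + ϵ • cs φ) := by
      rw [continuous_iff_continuousAt]
      intro φ
      have h2 : ContinuousAt (fun φ => p + ϵ • cs φ) φ := by
        have := continuous_cs
        fun_prop
      exact ContinuousAt.comp (f := fun φ => p + ϵ • cs φ) (hu φ).continuousAt h2
    exact this.measurable.enorm.pow_const 2
  rw [← lintegral_indicator Metric.isOpen_ball.measurableSet,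
    polar_lint p _ (hm.indicator Metric.isOpen_ball.measurableSet)]
  set J : ENNReal := ∫⁻ φ in Ioo (-π) π, (ENNReal.ofReal (4 / ϵ ^ 2) * ‖u (p + ϵ • cs φ)‖ₑ ^ 2
    + 16 * H (p + ϵ • cs φ)) with hJ
  have h1 : ∀ r ∈ Ioi (0:ℝ), ∫⁻ φ in Ioo (-π) π, ENNReal.ofReal r *
      (Metric.ball p ϵ).indicator (fun q => ENNReal.ofReal (gradSq v q)) (p + r • cs φ)
      ≤ (Ioo 0 ϵ).indicator (fun _ => ENNReal.ofReal ϵ * J) r := by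
    intro r hr
    have hr : 0 < r := hr
    by_cases hr2 : r < ϵ
    · have hmem : r ∈ Ioo 0 ϵ := ⟨hr, hr2⟩
      rw [indicator_of_mem hmem, hJ, ← lintegral_const_mul' _ _ ENNReal.ofReal_ne_top]
      apply lintegral_mono
      intro φ
      have hin : p + r • cs φ ∈ Metric.ball p ϵ := by
        simp [norm_smul, norm_cs, abs_of_pos hr, hr2]
      simp only [indicator_of_mem hin]
      gcongr
      refine (ENNReal.ofReal_le_ofReal (grad_v hϵ hu hv hr hr2 φ)).trans ?_
      rw [ENNReal.ofReal_add (by positivity) (mul_nonneg (by norm_num) (gradSq_nonneg _ _)),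
        ENNReal.ofReal_mul (by positivity), ENNReal.ofReal_mul (by norm_num), enorm_sq_ofReal]
      gcongr
      · norm_num
      · exact hH φ
    · have : ∀ φ, p + r • cs φ ∉ Metric.ball p ϵ := by
        intro φ
        simp [norm_smul, norm_cs, abs_of_pos hr]
        linarith
      simp [this]
  refine (setLIntegral_mono' measurableSet_Ioi h1).trans ?_
  refine (setLIntegral_le_lintegral _ _).trans ?_
  rw [lintegral_indicator measurableSet_Ioo, setLIntegral_const, Real.volume_Ioo, sub_zero, hJ,
    lintegral_add_right _ (hb.const_mul _), lintegral_const_mul _ hub, lintegral_const_mul _ hb]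
  generalize (∫⁻ φ in Ioo (-π) π, H (p + ϵ • cs φ)) = X
  generalize (∫⁻ φ in Ioo (-π) π, ‖u (p + ϵ • cs φ)‖ₑ ^ 2) = Y
  apply le_of_eq
  have e1 : ENNReal.ofReal (4 / ϵ ^ 2) * (ENNReal.ofReal ϵ * ENNReal.ofReal ϵ) = 4 := by
    rw [← ENNReal.ofReal_mul hϵ.le, ← ENNReal.ofReal_mul (by positivity)]
    have : 4 / ϵ ^ 2 * (ϵ * ϵ) = 4 := by field_simp
    rw [this]; norm_num
  have e2 : ENNReal.ofReal (16 * ϵ ^ 2) = 16 * (ENNReal.ofReal ϵ * ENNReal.ofReal ϵ) := by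
    rw [← ENNReal.ofReal_mul hϵ.le, ENNReal.ofReal_mul (by norm_num), sq]; norm_num
  rw [e2, ← e1]
  ring

lemma v_bound (p : E2) {ρ : ℝ} (hρ : 0 < ρ) :
    ∃ C₁ : ℝ, 0 ≤ C₁ ∧ ∀ ε : ℝ, 0 < ε → ε < 1 → 2 * ε < ρ → ∀ V : Set E2, IsOpen V →
      (∀ q, ε < ‖q - p‖ → ‖q - p‖ ≤ 2 * ρ → q ∈ V) →
      ∀ u : E2 → ℂ, ContDiffOn ℝ 1 u V → ∀ H : E2 → ENNReal, Measurable H →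
      (∀ q ∈ V, ENNReal.ofReal (gradSq u q) ≤ H q) → (∀ q ∈ V, ‖u q‖ₑ ^ 2 ≤ H q) →
      ∀ M : ℝ, 0 ≤ M → ∫⁻ q, H q ≤ ENNReal.ofReal M →
      ∃ ϵ ∈ Ioo ε (2 * ε), ∀ v : E2 → ℂ,
        (∀ r φ : ℝ, 0 ≤ r → r < ϵ → v (p + r • cs φ) = (r / ϵ : ℝ) * u (p + ϵ • cs φ)) →
        ∫⁻ q in Metric.ball p ϵ, ENNReal.ofReal (gradSq v q)
          ≤ ENNReal.ofReal (C₁ * ε ^ (-(2:ℝ)/3) * M) := by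
  refine ⟨8 / ρ ^ 2 + 32 + 8 * ((2 * ρ) ^ ((2:ℝ)/3) / (2/3)), by positivity, ?_⟩
  intro ε hε hε1 hερ V hV hann u hu H mH hH hH2 M hM hHM
  obtain ⟨ϵ, hϵ, hϵb⟩ := select p H mH hHM hε (by linarith : ε < 2 * ε)
  obtain ⟨s, hs, hsb⟩ := select p H mH hHM hρ (by linarith : ρ < 2 * ρ)
  refine ⟨ϵ, hϵ, fun v hv => ?_⟩
  have hϵ0 : 0 < ϵ := hε.trans hϵ.1
  have hs0 : 0 < s := hρ.trans hs.1
  have hϵs : ϵ < s := by linarith [hϵ.2, hs.1]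
  have hnorm : ∀ (r φ : ℝ), 0 < r → ‖p + r • cs φ - p‖ = r := by
    intro r φ hr
    simp [norm_smul, norm_cs, abs_of_pos hr]
  have hsub : ∀ φ, ∀ r ∈ Icc ϵ s, p + r • cs φ ∈ V := by
    intro φ r hr
    have h0 : 0 < r := hϵ0.trans_le hr.1
    apply hann
    · rw [hnorm r φ h0]; linarith [hr.1, hϵ.1]
    · rw [hnorm r φ h0]; linarith [hr.2, hs.2]
  have hcirc : ∀ φ, p + ϵ • cs φ ∈ V := fun φ => hsub φ ϵ ⟨le_rfl, hϵs.le⟩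
  have T := trace_int hV hu p mH hH hH2 hϵ0 hϵs hsub
  have B := ball_v (v := v) hϵ0 (fun φ => (hu.differentiableOn one_ne_zero).differentiableAt
    (hV.mem_nhds (hcirc φ))) hv mH (fun φ => hH _ (hcirc φ))
  rw [lintegral_const_mul' _ _ ENNReal.ofReal_ne_top] at hϵb hsb
  refine B.trans ?_
  clear B
  generalize (∫⁻ φ in Ioo (-π) π, H (p + ϵ • cs φ)) = X at *
  generalize (∫⁻ φ in Ioo (-π) π, H (p + s • cs φ)) = Z at *
  generalize (∫⁻ φ in Ioo (-π) π, ‖u (p + ϵ • cs φ)‖ₑ ^ 2) = Y at *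
  have dv : ∀ {x t m : ℝ} {Q : ENNReal}, 0 < x → 0 < t →
      ENNReal.ofReal x * Q ≤ ENNReal.ofReal m / ENNReal.ofReal t → Q ≤ ENNReal.ofReal (m / t / x) := by
    intro x t m Q hx ht h
    rw [← ENNReal.ofReal_div_of_pos ht] at h
    rw [ENNReal.ofReal_div_of_pos hx]
    rw [ENNReal.le_div_iff_mul_le (by simp [hx]) (by simp), mul_comm]
    exact h
  have hX := dv hϵ0 (by linarith) hϵb
  have hZ := dv hs0 (by linarith) hsb
  have hX' : ENNReal.ofReal (16 * ϵ ^ 2) * X ≤ ENNReal.ofReal (32 * M) := by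
    calc _ ≤ ENNReal.ofReal (16 * ϵ ^ 2) * ENNReal.ofReal (M / (2 * ε - ε) / ϵ) := by gcongr
      _ = ENNReal.ofReal (16 * ϵ ^ 2 * (M / (2 * ε - ε) / ϵ)) := by
        rw [← ENNReal.ofReal_mul (by positivity)]
      _ ≤ _ := by
        apply ENNReal.ofReal_le_ofReal
        have : 2 * ε - ε = ε := by ring
        rw [this]
        have e : 16 * ϵ ^ 2 * (M / ε / ϵ) = 16 * (ϵ / ε) * M := by field_simp
        rw [e]
        have : ϵ / ε ≤ 2 := by rw [div_le_iff₀ hε]; linarith [hϵ.2]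
        nlinarith
  have hZ' : Z ≤ ENNReal.ofReal (1 / ρ ^ 2 * M) := by
    refine hZ.trans (ENNReal.ofReal_le_ofReal ?_)
    have : 2 * ρ - ρ = ρ := by ring
    rw [this, div_div, one_div, ← div_eq_inv_mul]
    have := hs.1
    gcongr
    nlinarith
  have hlog0 : 0 ≤ Real.log (s / ϵ) := Real.log_nonneg (by rw [le_div_iff₀ hϵ0]; linarith)
  have hlog : Real.log (s / ϵ) ≤ (2 * ρ) ^ ((2:ℝ)/3) / (2/3) * ε ^ (-(2:ℝ)/3) := by
    have h1 : Real.log (s / ϵ) ≤ Real.log (2 * ρ / ε) := by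
      apply Real.log_le_log (by positivity)
      have := hs.2.le
      have := hϵ.1.le
      gcongr
    have h2 := Real.log_le_rpow_div (x := 2 * ρ / ε) (ε := 2/3) (by positivity) (by norm_num)
    refine (h1.trans h2).trans_eq ?_
    rw [Real.div_rpow (by positivity) hε.le, neg_div, Real.rpow_neg hε.le]
    ring
  have hY : 4 * Y ≤ ENNReal.ofReal (8 / ρ ^ 2 * M + 8 * Real.log (s / ϵ) * M) := by
    calc 4 * Y ≤ 4 * (2 * ENNReal.ofReal (1 / ρ ^ 2 * M)
          + 2 * (ENNReal.ofReal (Real.log (s / ϵ)) * ENNReal.ofReal M)) := by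
          gcongr
          exact T.trans (by gcongr)
      _ = ENNReal.ofReal (4 * (2 * (1 / ρ ^ 2 * M) + 2 * (Real.log (s / ϵ) * M))) := by
          have hP : 0 ≤ 1 / ρ ^ 2 * M := by positivity
          generalize 1 / ρ ^ 2 * M = P at hP ⊢
          rw [ENNReal.ofReal_mul (p := 4) (by norm_num), ENNReal.ofReal_add (by positivity) (by positivity),
            ENNReal.ofReal_mul (p := 2) (by norm_num), ENNReal.ofReal_mul (p := 2) (by norm_num),
            ENNReal.ofReal_mul hlog0]
          norm_num
      _ = _ := by congr 1; ring
  refine (add_le_add hY hX').trans ?_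
  rw [← ENNReal.ofReal_add (by positivity) (by positivity)]
  apply ENNReal.ofReal_le_ofReal
  have h1 : 1 ≤ ε ^ (-(2:ℝ)/3) := by
    apply Real.one_le_rpow_of_pos_of_le_one_of_nonpos hε hε1.le
    norm_num
  generalize ε ^ (-(2:ℝ)/3) = t at *
  have hc : 0 ≤ 8 / ρ ^ 2 + 32 := by positivity
  have k1 : (8 / ρ ^ 2 + 32) * M ≤ (8 / ρ ^ 2 + 32) * t * M := by
    have : (8 / ρ ^ 2 + 32) * 1 ≤ (8 / ρ ^ 2 + 32) * t := by gcongr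
    rw [mul_one] at this
    gcongr
  have k2 := mul_le_mul_of_nonneg_right hlog hM
  linarith

lemma pt_cs (a0 a1 b0 b1 c0 c1 : ℂ) :
    ‖a0 * (starRingEnd ℂ) (b0 - c0) + a1 * (starRingEnd ℂ) (b1 - c1)‖ ≤
      √(‖a0‖ ^ 2 + ‖a1‖ ^ 2) *
        √(2 * (‖b0‖ ^ 2 + ‖b1‖ ^ 2) + 2 * (‖c0‖ ^ 2 + ‖c1‖ ^ 2)) := by
  rw [← Real.sqrt_mul (by positivity)]
  apply Real.le_sqrt_of_sq_le
  have h1 : ‖a0 * (starRingEnd ℂ) (b0 - c0) + a1 * (starRingEnd ℂ) (b1 - c1)‖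
      ≤ ‖a0‖ * ‖b0 - c0‖ + ‖a1‖ * ‖b1 - c1‖ := by
    refine (norm_add_le _ _).trans ?_
    rw [norm_mul, norm_mul, RCLike.norm_conj, RCLike.norm_conj]
  have h0 : ∀ b c : ℂ, ‖b - c‖ ^ 2 ≤ 2 * ‖b‖ ^ 2 + 2 * ‖c‖ ^ 2 := by
    intro b c
    have := norm_sub_le b c
    nlinarith [norm_nonneg (b - c), norm_nonneg b, norm_nonneg c, sq_nonneg (‖b‖ - ‖c‖)]
  have k0 := h0 b0 c0
  have k1 := h0 b1 c1
  calc _ ≤ (‖a0‖ * ‖b0 - c0‖ + ‖a1‖ * ‖b1 - c1‖) ^ 2 := pow_le_pow_left₀ (norm_nonneg _) h1 2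
    _ ≤ (‖a0‖ ^ 2 + ‖a1‖ ^ 2) * (‖b0 - c0‖ ^ 2 + ‖b1 - c1‖ ^ 2) := by
      nlinarith [sq_nonneg (‖a0‖ * ‖b1 - c1‖ - ‖a1‖ * ‖b0 - c0‖)]
    _ ≤ _ := by
      apply mul_le_mul_of_nonneg_left _ (by positivity)
      linarith

lemma form_bound {f u v : E2 → ℂ} {S : Set E2} {p : E2} {ϵ : ℝ} (hϵ : 0 < ϵ) (mS : MeasurableSet S)
    (hz : ∀ q ∈ S, ϵ < dist q p → v =ᶠ[nhds q] u) :
    ‖∫ q in S, (pd 0 f q * (starRingEnd ℂ) (pd 0 v q - pd 0 u q)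
            + pd 1 f q * (starRingEnd ℂ) (pd 1 v q - pd 1 u q))‖ₑ ^ 2
      ≤ (∫⁻ q in Metric.ball p ϵ, ENNReal.ofReal (gradSq f q)) *
        (2 * (∫⁻ q in Metric.ball p ϵ, ENNReal.ofReal (gradSq v q))
          + 2 * ∫⁻ q in S, ENNReal.ofReal (gradSq u q)) := by
  have mf := gradSq_measurable f
  have mu := gradSq_measurable u
  have mv := gradSq_measurable v
  have key : ∀ q, q ∉ Metric.sphere p ϵ → q ∈ S →
      ‖pd 0 f q * (starRingEnd ℂ) (pd 0 v q - pd 0 u q)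
            + pd 1 f q * (starRingEnd ℂ) (pd 1 v q - pd 1 u q)‖ₑ ≤
      (Metric.ball p ϵ).indicator (fun q => ENNReal.ofReal √(gradSq f q) *
        ENNReal.ofReal √(2 * gradSq v q + 2 * gradSq u q)) q := by
    intro q hq hqS
    by_cases hb : q ∈ Metric.ball p ϵ
    · rw [indicator_of_mem hb, ← ENNReal.ofReal_mul (by positivity), ← ofReal_norm]
      exact ENNReal.ofReal_le_ofReal (pt_cs _ _ _ _ _ _)
    · have hgt : ϵ < dist q p := by
        simp only [Metric.mem_ball, not_lt] at hb
        exact lt_of_le_of_ne hb (fun h => hq (Metric.mem_sphere.2 h.symm))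
      rw [pd_congr 0 (hz q hqS hgt), pd_congr 1 (hz q hqS hgt)]
      simp
  have hnull : ∀ᵐ q ∂(volume : Measure E2), q ∉ Metric.sphere p ϵ := by
    exact measure_eq_zero_iff_ae_notMem.1 (Measure.addHaar_sphere volume p ϵ)
  have h1 : ‖∫ q in S, (pd 0 f q * (starRingEnd ℂ) (pd 0 v q - pd 0 u q)
            + pd 1 f q * (starRingEnd ℂ) (pd 1 v q - pd 1 u q))‖ₑ
      ≤ ∫⁻ q in Metric.ball p ϵ ∩ S, ENNReal.ofReal √(gradSq f q) *
        ENNReal.ofReal √(2 * gradSq v q + 2 * gradSq u q) := by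
    refine (enorm_integral_le_lintegral_enorm _).trans ?_
    rw [← Measure.restrict_restrict Metric.isOpen_ball.measurableSet,
      ← lintegral_indicator Metric.isOpen_ball.measurableSet]
    apply lintegral_mono_ae
    rw [ae_restrict_iff' mS]
    filter_upwards [hnull] with q hq hqS
    exact key q hq hqS
  refine (pow_le_pow_left' h1 2).trans ((lint_cs _ (by fun_prop) (by fun_prop)).trans ?_)
  have hsq : ∀ x : ℝ, 0 ≤ x → ENNReal.ofReal √x ^ 2 = ENNReal.ofReal x := by
    intro x hx
    rw [← ENNReal.ofReal_pow (by positivity), Real.sq_sqrt hx]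
  apply mul_le_mul'
  · calc _ = ∫⁻ q in Metric.ball p ϵ ∩ S, ENNReal.ofReal (gradSq f q) := by
          congr 1; ext q; exact hsq _ (gradSq_nonneg f q)
      _ ≤ _ := lintegral_mono_set inter_subset_left
  · calc _ = ∫⁻ q in Metric.ball p ϵ ∩ S, (2 * ENNReal.ofReal (gradSq v q)
          + 2 * ENNReal.ofReal (gradSq u q)) := by
          congr 1; ext q
          have a := gradSq_nonneg v q
          have b := gradSq_nonneg u q
          rw [hsq _ (by positivity), ENNReal.ofReal_add (by positivity) (by positivity),
            ENNReal.ofReal_mul (by norm_num), ENNReal.ofReal_mul (by norm_num)]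
          norm_num
      _ = 2 * (∫⁻ q in Metric.ball p ϵ ∩ S, ENNReal.ofReal (gradSq v q))
          + 2 * ∫⁻ q in Metric.ball p ϵ ∩ S, ENNReal.ofReal (gradSq u q) := by
          rw [lintegral_add_left (by fun_prop), lintegral_const_mul _ (by fun_prop),
            lintegral_const_mul _ (by fun_prop)]
      _ ≤ _ := by
          gcongr
          · exact inter_subset_left
          · exact inter_subset_right

lemma final_arith {Cf : ENNReal} (hCf : Cf ≠ ⊤) {C₁ ε ϵ M A : ℝ} (hC₁ : 0 ≤ C₁) (hε : 0 < ε)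
    (hε1 : ε < 1) (hϵ : ϵ ∈ Ioo ε (2 * ε)) (hM : 0 ≤ M) (hA : 0 ≤ A) {z : ℂ} {F B U : ENNReal}
    (hI : ‖z‖ₑ ^ 2 ≤ F * (2 * B + 2 * U)) (hF : F ≤ Cf * ENNReal.ofReal ϵ * ENNReal.ofReal A)
    (hB : B ≤ ENNReal.ofReal (C₁ * ε ^ (-(2:ℝ)/3) * M)) (hU : U ≤ ENNReal.ofReal M) :
    ‖z‖ ≤ (√(4 * Cf.toReal * (C₁ + 1)) + 1) * ε ^ ((1:ℝ)/6) * √A * √M := by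
  have hϵ0 : 0 < ϵ := hε.trans hϵ.1
  have hc : 0 ≤ Cf.toReal := ENNReal.toReal_nonneg
  rw [← ENNReal.ofReal_toReal hCf] at hF
  generalize Cf.toReal = c at hc hF ⊢
  have ht : 1 ≤ ε ^ (-(2:ℝ)/3) := by
    apply Real.one_le_rpow_of_pos_of_le_one_of_nonpos hε hε1.le
    norm_num
  have hte : ε * ε ^ (-(2:ℝ)/3) = (ε ^ ((1:ℝ)/6)) ^ 2 := by
    rw [← Real.rpow_natCast, ← Real.rpow_mul hε.le]
    nth_rewrite 1 [← Real.rpow_one ε]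
    rw [← Real.rpow_add hε]
    norm_num
  generalize ε ^ (-(2:ℝ)/3) = t at *
  have hs : 0 < ε ^ ((1:ℝ)/6) := by positivity
  generalize ε ^ ((1:ℝ)/6) = s at *
  have ht0 : 0 ≤ t := by linarith
  have h1 : ‖z‖ ^ 2 ≤ c * ϵ * A * (2 * (C₁ * t * M) + 2 * M) := by
    rw [enorm_sq_ofReal] at hI
    have h2 : ENNReal.ofReal (‖z‖ ^ 2) ≤ ENNReal.ofReal (c * ϵ * A * (2 * (C₁ * t * M) + 2 * M)) := by
      calc _ ≤ F * (2 * B + 2 * U) := hI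
        _ ≤ (ENNReal.ofReal c * ENNReal.ofReal ϵ * ENNReal.ofReal A) *
            (2 * ENNReal.ofReal (C₁ * t * M) + 2 * ENNReal.ofReal M) := by gcongr
        _ = _ := by
          have hP : 0 ≤ C₁ * t * M := by positivity
          generalize C₁ * t * M = P at hP ⊢
          rw [ENNReal.ofReal_mul (by positivity), ENNReal.ofReal_mul (by positivity),
            ENNReal.ofReal_mul (by positivity), ENNReal.ofReal_add (by positivity) (by positivity),
            ENNReal.ofReal_mul (p := 2) (by norm_num), ENNReal.ofReal_mul (p := 2) (by norm_num)]
          norm_num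
    exact (ENNReal.ofReal_le_ofReal_iff (by positivity)).1 h2
  have h3 : c * ϵ * A * (2 * (C₁ * t * M) + 2 * M) ≤ (√(4 * c * (C₁ + 1)) * s * √A * √M) ^ 2 := by
    rw [mul_pow, mul_pow, mul_pow, Real.sq_sqrt (by positivity), Real.sq_sqrt hA, Real.sq_sqrt hM, ← hte]
    have : 2 * (C₁ * t * M) + 2 * M ≤ 2 * (C₁ + 1) * t * M := by nlinarith
    calc _ ≤ c * (2 * ε) * A * (2 * (C₁ + 1) * t * M) := by
          have := hϵ.2.le
          gcongr
      _ = _ := by ring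
  have h4 := abs_le_of_sq_le_sq (h1.trans h3) (by positivity)
  have h5 : ‖z‖ ≤ √(4 * c * (C₁ + 1)) * s * √A * √M := (le_abs_self _).trans h4
  refine h5.trans ?_
  gcongr
  linarith

/-- the estimate for condition (2.7), Step 2 of the proof of
Theorem 3.1. Let `Ω ⊆ ℝ²` be a bounded open set all of whose vertical and horizontal
sections are intervals, and fix a point `p = (p₁, p₂) ∈ Ω`. There exist `C > 0` and
`ε₀ > 0` such that for every `ε ∈ (0, ε₀)`, every compact `K ⊆ B̄_ε(p)` of Lebesgue
measure zero with `Ω ∖ K` satisfying property* and `B̄_{2ε}(p) ⊆ Ω`, and every `C¹`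
function `u` on `Ω ∖ K` with finite `H¹` norm, there is `ϵ ∈ (ε, 2ε)` such that, with
`v` equal to `u` on `Ω ∖ B_ϵ(p)` and to the radially linear extension on `B_ϵ(p)`,
every `f ∈ C²(Ω)` with `f`, `|∇f|`, `Δf` square-integrable and
`Re ∫_Ω (Δf)·conj(f) ≤ 0` satisfies
`|∫_{Ω∖K} ∇f · conj(∇v − ∇u)| ≤ C ε^{1/6} (∫_Ω |−Δf+f|²)^{1/2} ‖u‖₁`. -/
theorem sesquilinear_form_estimate (Ω : Set E2) (hΩo : IsOpen Ω)
    (hΩb : Bornology.IsBounded Ω)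
    (hvert : ∀ x : ℝ, ({z : ℝ | pt x z ∈ Ω}).OrdConnected)
    (hhorz : ∀ y : ℝ, ({z : ℝ | pt z y ∈ Ω}).OrdConnected)
    (p₁ p₂ : ℝ) (hp : pt p₁ p₂ ∈ Ω) :
    ∃ C > 0, ∃ ε₀ > 0, ∀ ε : ℝ, 0 < ε → ε < ε₀ →
      ∀ K : Set E2, IsCompact K → K ⊆ Metric.closedBall (pt p₁ p₂) ε → volume K = 0 →
      (∀ x₀ y₀ : ℝ, pt x₀ y₀ ∈ Ω \ K →
        (∀ z : ℝ, pt x₀ z ∉ K) ∨ (∀ z : ℝ, pt z y₀ ∉ K)) →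
      Metric.closedBall (pt p₁ p₂) (2 * ε) ⊆ Ω →
      ∀ u : E2 → ℂ, ContDiffOn ℝ 1 u (Ω \ K) →
      IntegrableOn (fun q => gradSq u q + ‖u q‖ ^ 2) (Ω \ K) →
      ∃ ϵ ∈ Set.Ioo ε (2 * ε), ∀ v : E2 → ℂ,
      (∀ q ∈ Ω \ Metric.ball (pt p₁ p₂) ϵ, v q = u q) →
      (∀ r φ : ℝ, 0 ≤ r → r < ϵ →
        v (pt (p₁ + r * Real.cos φ) (p₂ + r * Real.sin φ))
          = (r / ϵ : ℝ) * u (pt (p₁ + ϵ * Real.cos φ) (p₂ + ϵ * Real.sin φ))) →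
      ∀ f : E2 → ℂ, ContDiffOn ℝ 2 f Ω →
      IntegrableOn (fun q => ‖f q‖ ^ 2) Ω →
      IntegrableOn (fun q => gradSq f q) Ω →
      IntegrableOn (fun q => ‖lap f q‖ ^ 2) Ω →
      (∫ q in Ω, lap f q * (starRingEnd ℂ) (f q)).re ≤ 0 →
      ‖∫ q in Ω \ K,
          (pd 0 f q * (starRingEnd ℂ) (pd 0 v q - pd 0 u q)
            + pd 1 f q * (starRingEnd ℂ) (pd 1 v q - pd 1 u q))‖
        ≤ C * ε ^ ((1:ℝ)/6)
            * Real.sqrt (∫ q in Ω, ‖-lap f q + f q‖ ^ 2)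
            * Real.sqrt (∫ q in Ω \ K, (gradSq u q + ‖u q‖ ^ 2)) := by
  set p : E2 := pt p₁ p₂ with hpdef
  obtain ⟨δ, hδ, hδsub⟩ := Metric.isOpen_iff.1 hΩo p hp
  obtain ⟨ρ, hρ, hρδ⟩ : ∃ ρ : ℝ, 0 < ρ ∧ 5 * ρ < δ := ⟨δ / 6, by positivity, by linarith⟩
  have hball : Metric.closedBall p (5 * ρ) ⊆ Ω :=
    (Metric.closedBall_subset_ball hρδ).trans hδsub
  obtain ⟨Cf, hCf, hf_est⟩ := f_estimate hΩo p hρ hball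
  obtain ⟨C₁, hC₁, hv_est⟩ := v_bound p hρ
  refine ⟨√(4 * Cf.toReal * (C₁ + 1)) + 1, by positivity, min 1 (ρ / 2), by positivity, ?_⟩
  intro ε hε hε₀ K hK hKsub hK0 _ _ u hu huint
  have hε1 : ε < 1 := hε₀.trans_le (min_le_left _ _)
  have hερ : 2 * ε < ρ := by linarith [hε₀.trans_le (min_le_right 1 (ρ / 2))]
  have hV : IsOpen (Ω \ K) := hΩo.sdiff hK.isClosed
  set V := Ω \ K with hVdef
  set M : ℝ := ∫ q in V, (gradSq u q + ‖u q‖ ^ 2) with hMdef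
  have hM : 0 ≤ M := integral_nonneg fun q => add_nonneg (gradSq_nonneg u q) (by positivity)
  obtain ⟨H, mH, hHv, hHM⟩ : ∃ H : E2 → ENNReal, Measurable H ∧
      (∀ q ∈ V, H q = ENNReal.ofReal (gradSq u q + ‖u q‖ ^ 2)) ∧ ∫⁻ q, H q = ENNReal.ofReal M := by
    classical
    refine ⟨V.indicator fun q => ENNReal.ofReal (gradSq u q + ‖V.piecewise u 0 q‖ ^ 2), ?_, ?_, ?_⟩
    · have m1 := gradSq_measurable u
      have m2 : Measurable (V.piecewise u 0) :=
        hu.continuousOn.measurable_piecewise continuousOn_const hV.measurableSet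
      exact Measurable.indicator (by fun_prop) hV.measurableSet
    · intro q hq
      simp [hq]
    · rw [lintegral_indicator hV.measurableSet, hMdef, ofReal_integral_eq_lintegral_ofReal huint
        (Filter.Eventually.of_forall fun q => add_nonneg (gradSq_nonneg u q) (by positivity))]
      apply setLIntegral_congr_fun hV.measurableSet
      intro q hq
      simp [hq]
  have hH1 : ∀ q ∈ V, ENNReal.ofReal (gradSq u q) ≤ H q := by
    intro q hq
    rw [hHv q hq]
    exact ENNReal.ofReal_le_ofReal (by nlinarith [sq_nonneg ‖u q‖])
  have hH2 : ∀ q ∈ V, ‖u q‖ₑ ^ 2 ≤ H q := by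
    intro q hq
    rw [hHv q hq, enorm_sq_ofReal]
    exact ENNReal.ofReal_le_ofReal (by linarith [gradSq_nonneg u q])
  have hann : ∀ q, ε < ‖q - p‖ → ‖q - p‖ ≤ 2 * ρ → q ∈ V := by
    intro q h1 h2
    refine ⟨hball ?_, fun hq => ?_⟩
    · rw [Metric.mem_closedBall, dist_eq_norm]; linarith
    · have := hKsub hq
      rw [Metric.mem_closedBall, dist_eq_norm] at this
      linarith
  obtain ⟨ϵ, hϵ, hvb⟩ := hv_est ε hε hε1 hερ V hV hann u hu H mH hH1 hH2 M hM hHM.le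
  have hϵ0 : 0 < ϵ := hε.trans hϵ.1
  refine ⟨ϵ, hϵ, ?_⟩
  intro v hv1 hv2 f hf hf1 _ hf3 hf4
  have hv2' : ∀ r φ : ℝ, 0 ≤ r → r < ϵ → v (p + r • cs φ) = (r / ϵ : ℝ) * u (p + ϵ • cs φ) := by
    intro r φ h0 h1
    have := hv2 r φ h0 h1
    rw [pt_polar, pt_polar] at this
    exact this
  have hB := hvb v hv2'
  have hF := hf_est f hf hf1 hf3 hf4 ϵ hϵ0 (by linarith [hϵ.2])
  have hz : ∀ q ∈ V, ϵ < dist q p → v =ᶠ[nhds q] u := by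
    intro q hq hd
    have hopen : IsOpen (Ω \ Metric.closedBall p ϵ) := hΩo.sdiff Metric.isClosed_closedBall
    have hmem : q ∈ Ω \ Metric.closedBall p ϵ := ⟨hq.1, by simpa using hd⟩
    filter_upwards [hopen.mem_nhds hmem] with x hx
    exact hv1 x ⟨hx.1, fun h => hx.2 (Metric.ball_subset_closedBall h)⟩
  have hI := form_bound (f := f) hϵ0 hV.measurableSet hz
  have hU : ∫⁻ q in V, ENNReal.ofReal (gradSq u q) ≤ ENNReal.ofReal M := by
    rw [← hHM]
    exact (setLIntegral_mono' hV.measurableSet hH1).trans (setLIntegral_le_lintegral _ _)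
  have hA : 0 ≤ ∫ q in Ω, ‖-lap f q + f q‖ ^ 2 := integral_nonneg fun q => by positivity
  exact final_arith hCf hC₁ hε hε1 hϵ hM hA hI hF hB hU
end
end
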